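/- arXiv:1405.6672 — 2 statements merged into one kernel-verified Lean document; each statement's English description precedes it below -/
import Mathlib

section
/- If P satisfies a margin condition with radius r_0, then the set M of optimal codebooks is finite. -/
open MeasureTheory Metric

noncomputable section

variable {H : Type*} [NormedAddCommGroup H] [InnerProductSpace ℝ H] [MeasurableSpace H]

/-- `qgamma k c x = min_j ‖x - c j‖²`. -/
def qgamma (k : ℕ) (c : Fin k → H) (x : H) : ℝ := ⨅ j : Fin k, ‖x - c j‖ ^ 2

/-- distortion (risk) of a codebook. -/
def qrisk (k : ℕ) (P : Measure H) (c : Fin k → H) : ℝ := ∫ x, qgamma k c x ∂P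

/-- the set of optimal codebooks. -/
def qopt (k : ℕ) (P : Measure H) : Set (Fin k → H) :=
  {c | ∀ c' : Fin k → H, qrisk k P c ≤ qrisk k P c'}

/-- the `i`-th (closed) Voronoi cell of the codebook `c`. -/
def vcell (k : ℕ) (c : Fin k → H) (i : Fin k) : Set H :=
  {x | ∀ j : Fin k, ‖x - c i‖ ≤ ‖x - c j‖}

/-- `B`, the minimal separation between code points of optimal codebooks. -/
def qB (k : ℕ) (P : Measure H) : ℝ :=
  sInf {b | ∃ c ∈ qopt k P, ∃ i j : Fin k, i ≠ j ∧ b = ‖c i - c j‖}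

/-- `p_min`, the minimal mass of a Voronoi cell of an optimal codebook. -/
def qpmin (k : ℕ) (P : Measure H) : ℝ :=
  sInf {p | ∃ c ∈ qopt k P, ∃ i : Fin k, p = (P (vcell k c i)).toReal}

/-- `N_{c*}`, the union of the boundaries between Voronoi cells. -/
def nbd (k : ℕ) (c : Fin k → H) : Set H :=
  ⋃ (i : Fin k) (j : Fin k) (_ : i ≠ j), vcell k c i ∩ vcell k c j

/-- the weight function `p(t)`, the maximal mass of the closed `t`-neighborhood
of `N_{c*}` over optimal codebooks `c*`. -/
def pweight (k : ℕ) (P : Measure H) (t : ℝ) : ℝ :=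
  sSup {p | ∃ c ∈ qopt k P, p = (P (cthickening t (nbd k c))).toReal}

/-- `P` is `M`-bounded: its support is contained in the closed ball `B(0,M)`. -/
def mbounded (P : Measure H) (M : ℝ) : Prop := P (closedBall (0 : H) M)ᶜ = 0

/-- the support of `P` contains more than `k` points. -/
def suppGT (P : Measure H) (k : ℕ) : Prop :=
  ∀ S : Finset H, S.card ≤ k → P ((S : Set H)ᶜ) ≠ 0

/-- the margin condition with radius `r0`. -/
def margin (k : ℕ) (P : Measure H) (M r0 : ℝ) : Prop :=
  0 < r0 ∧ mbounded P M ∧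
    ∀ t : ℝ, 0 ≤ t → t ≤ r0 → pweight k P t ≤ qB k P * qpmin k P * t / (128 * M ^ 2)

section helpers

set_option linter.unusedSectionVars false
set_option linter.style.haveILetI false

lemma qh_gamma_le {k : ℕ} (c : Fin k → H) (x : H) (j : Fin k) :
    qgamma k c x ≤ ‖x - c j‖ ^ 2 :=
  ciInf_le (Set.finite_range _).bddBelow j

lemma qh_exists_cell {k : ℕ} [Nonempty (Fin k)] (c : Fin k → H) (x : H) :
    ∃ i, x ∈ vcell k c i := by
  obtain ⟨i, hi⟩ := Finite.exists_min (fun i => ‖x - c i‖)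
  exact ⟨i, hi⟩

lemma qh_gamma_eq {k : ℕ} (c : Fin k → H) (x : H) (i : Fin k) (hx : x ∈ vcell k c i) :
    qgamma k c x = ‖x - c i‖ ^ 2 := by
  haveI : Nonempty (Fin k) := ⟨i⟩
  refine le_antisymm (qh_gamma_le c x i) (le_ciInf fun j => ?_)
  have := hx j
  gcongr

lemma qh_closed {k : ℕ} (c : Fin k → H) (i : Fin k) : IsClosed (vcell k c i) := by
  have : vcell k c i = ⋂ j, {x | ‖x - c i‖ ≤ ‖x - c j‖} := by
    ext x; simp [vcell]
  rw [this]
  exact isClosed_iInter fun j => isClosed_le (by fun_prop) (by fun_prop)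

lemma qh_mem_nbd {k : ℕ} (c : Fin k → H) (x : H) {i j : Fin k} (hij : i ≠ j)
    (hi : x ∈ vcell k c i) (hj : x ∈ vcell k c j) : x ∈ nbd k c := by
  simp only [nbd, Set.mem_iUnion]
  exact ⟨i, j, hij, hi, hj⟩

lemma qh_sum_ind {k : ℕ} (c d : Fin k → H) (x : H) (i : Fin k) (hi : x ∈ vcell k c i)
    (hx : x ∉ nbd k c) :
    ∑ l, (vcell k c l).indicator (fun x => ‖x - d l‖ ^ 2) x = ‖x - d i‖ ^ 2 := by
  rw [Finset.sum_eq_single i]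
  · simp [hi]
  · intro l _ hl
    apply Set.indicator_of_notMem
    intro h
    exact hx (qh_mem_nbd c x hl h hi)
  · simp

lemma qh_sqdiff (x u v : H) (M a : ℝ) (hx : ‖x‖ ≤ M) (hu : ‖u‖ ≤ M) (hv : ‖v‖ ≤ M)
    (h : ‖u - v‖ ≤ a) : ‖x - u‖ ^ 2 ≤ ‖x - v‖ ^ 2 + 4 * M * a := by
  have h1 : ‖x - u‖ ≤ ‖x - v‖ + a := by
    have : x - u = (x - v) - (u - v) := by abel
    rw [this]
    exact (norm_sub_le _ _).trans (by linarith)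
  have h2 : ‖x - u‖ ≤ 2 * M := (norm_sub_le _ _).trans (by linarith)
  have h3 : ‖x - v‖ ≤ 2 * M := (norm_sub_le _ _).trans (by linarith)
  have h4 := norm_nonneg (x - u)
  have h5 := norm_nonneg (x - v)
  have h6 : 0 ≤ a := (norm_nonneg _).trans h
  nlinarith

lemma qh_geom {k : ℕ} (c c' : Fin k → H) (M a b : ℝ) (i j : Fin k) (hij : i ≠ j) (x : H)
    (hx : ‖x‖ ≤ M) (hc : ∀ l, ‖c l‖ ≤ M) (hc' : ∀ l, ‖c' l‖ ≤ M)
    (ha : ∀ l, ‖c l - c' l‖ ≤ a) (hb : 0 < b) (hbc : b ≤ ‖c i - c j‖)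
    (hi : x ∈ vcell k c i) (hj : x ∈ vcell k c' j) :
    x ∈ cthickening (4 * M * a / b) (nbd k c) := by
  have hM : 0 ≤ M := (norm_nonneg _).trans hx
  have ha0 : 0 ≤ a := (norm_nonneg _).trans (ha i)
  set u := c j - c i with hu
  have hun : b ≤ ‖u‖ := by rw [hu, norm_sub_rev]; exact hbc
  have hu0 : 0 < ‖u‖ := hb.trans_le hun
  set f := ‖x - c j‖ ^ 2 - ‖x - c i‖ ^ 2 with hf
  have hf0 : 0 ≤ f := by
    have := hi j
    rw [hf, sub_nonneg]; gcongr
  have hf1 : f ≤ 8 * M * a := by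
    have h1 := qh_sqdiff x (c j) (c' j) M a hx (hc j) (hc' j) (ha j)
    have h2 := qh_sqdiff x (c' i) (c i) M a hx (hc' i) (hc i)
      (by rw [norm_sub_rev]; exact ha i)
    have h3 : ‖x - c' j‖ ^ 2 ≤ ‖x - c' i‖ ^ 2 := by
      have := hj i
      gcongr
    linarith
  set s := f / (2 * ‖u‖ ^ 2) with hs
  set y := x + s • u with hy
  have hyx : ‖y - x‖ ≤ 4 * M * a / b := by
    have : y - x = s • u := by rw [hy]; abel
    rw [this, norm_smul, Real.norm_of_nonneg (by positivity)]
    have : s * ‖u‖ = f / 2 / ‖u‖ := by rw [hs]; field_simp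
    rw [this]
    gcongr
    linarith
  have hyeq : ‖y - c j‖ = ‖y - c i‖ := by
    have h1 : ‖y - c j‖ ^ 2 = ‖y - c i‖ ^ 2 := by
      have e1 : y - c j = (y - c i) - u := by rw [hu]; abel
      have e2 : x - c j = (x - c i) - u := by rw [hu]; abel
      have e3 : y - c i = (x - c i) + s • u := by rw [hy]; abel
      have h5 : f = ‖u‖ ^ 2 - 2 * inner ℝ (x - c i) u := by
        rw [hf, e2, norm_sub_sq_real]; ring
      rw [e1, norm_sub_sq_real, e3, inner_add_left, inner_smul_left, real_inner_self_eq_norm_sq]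
      have h6 : s * (2 * ‖u‖ ^ 2) = f := by rw [hs]; field_simp
      simp only [conj_trivial]
      linarith
    exact (pow_left_inj₀ (norm_nonneg _) (norm_nonneg _) two_ne_zero).1 h1
  haveI : Nonempty (Fin k) := ⟨i⟩
  have hpre : IsPreconnected (segment ℝ x y) := (convex_segment x y).isPreconnected
  rw [isPreconnected_closed_iff] at hpre
  have hB : IsClosed (⋃ l : {l : Fin k // l ≠ i}, vcell k c l) :=
    isClosed_iUnion_of_finite fun l => qh_closed c l
  obtain ⟨z, hz1, hz2, hz3⟩ := hpre (vcell k c i) (⋃ l : {l : Fin k // l ≠ i}, vcell k c l)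
    (qh_closed c i) hB
    (by
      intro z _
      obtain ⟨l, hl⟩ := qh_exists_cell c z
      by_cases h : l = i
      · left; rw [← h]; exact hl
      · right; exact Set.mem_iUnion.2 ⟨⟨l, h⟩, hl⟩)
    ⟨x, left_mem_segment ℝ x y, hi⟩
    ⟨y, right_mem_segment ℝ x y, by
      obtain ⟨l, hl⟩ := qh_exists_cell c y
      by_cases h : l = i
      · refine Set.mem_iUnion.2 ⟨⟨j, hij.symm⟩, ?_⟩
        intro m
        have := hl m
        rw [h] at this
        show ‖y - c j‖ ≤ _
        rw [hyeq]; exact this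
      · exact Set.mem_iUnion.2 ⟨⟨l, h⟩, hl⟩⟩
  obtain ⟨⟨l, hl⟩, hz3⟩ := Set.mem_iUnion.1 hz3
  refine mem_cthickening_of_dist_le x z _ _ (qh_mem_nbd c z hl.symm hz2 hz3) ?_
  have hsub : segment ℝ x y ⊆ closedBall x (4 * M * a / b) :=
    (convex_closedBall x _).segment_subset (mem_closedBall_self (by positivity))
      (by rw [mem_closedBall, dist_eq_norm]; exact hyx)
  have := hsub hz1
  rwa [mem_closedBall, dist_comm] at this

variable [BorelSpace H] [SecondCountableTopology H]

lemma qh_int_id (P : Measure H) [IsFiniteMeasure P] (M : ℝ) (hb : ∀ᵐ x ∂P, ‖x‖ ≤ M) :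
    Integrable (fun x : H => x) P :=
  Integrable.of_bound (by fun_prop) M hb

lemma qh_int_sq (P : Measure H) [IsFiniteMeasure P] (M : ℝ) (hb : ∀ᵐ x ∂P, ‖x‖ ≤ M) (d : H) :
    Integrable (fun x : H => ‖x - d‖ ^ 2) P := by
  refine Integrable.of_bound (by fun_prop) ((M + ‖d‖) ^ 2) ?_
  filter_upwards [hb] with x hx
  rw [Real.norm_of_nonneg (by positivity)]
  have := norm_sub_le x d
  gcongr
  linarith

lemma qh_int_gamma {k : ℕ} [Nonempty (Fin k)] (P : Measure H) [IsFiniteMeasure P] (M : ℝ)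
    (hb : ∀ᵐ x ∂P, ‖x‖ ≤ M) (c : Fin k → H) :
    Integrable (qgamma k c) P := by
  obtain ⟨j⟩ := (inferInstance : Nonempty (Fin k))
  refine (qh_int_sq P M hb (c j)).mono' ?_ ?_
  · apply Measurable.aestronglyMeasurable
    unfold qgamma
    exact Measurable.iInf fun j => by fun_prop
  · refine Filter.Eventually.of_forall fun x => ?_
    have h0 : 0 ≤ qgamma k c x := Real.iInf_nonneg fun _ => by positivity
    rw [Real.norm_of_nonneg h0]
    exact qh_gamma_le c x j

/-- bias-variance decomposition -/
lemma qh_bias (P : Measure H) [IsFiniteMeasure P] [CompleteSpace H] (M : ℝ)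
    (hb : ∀ᵐ x ∂P, ‖x‖ ≤ M) (m d : H)
    (hm : ∫ x, x ∂P = P.real Set.univ • m) :
    ∫ x, ‖x - d‖ ^ 2 ∂P = ∫ x, ‖x - m‖ ^ 2 ∂P + P.real Set.univ * ‖m - d‖ ^ 2 := by
  have hi := qh_int_id P M hb
  have e : ∀ x : H, ‖x - d‖ ^ 2 = ‖x - m‖ ^ 2 + (2 * inner ℝ (m - d) (x - m) + ‖m - d‖ ^ 2) := by
    intro x
    have : x - d = (x - m) + (m - d) := by abel
    rw [this, norm_add_sq_real, real_inner_comm]; ring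
  have hxm : Integrable (fun x : H => x - m) P := hi.sub (integrable_const m)
  have hin : Integrable (fun x : H => inner ℝ (m - d) (x - m)) P := hxm.const_inner (m - d)
  have h0 : ∫ x, inner ℝ (m - d) (x - m) ∂P = 0 := by
    rw [integral_inner hxm, integral_sub hi (integrable_const m), hm]
    simp
  have hsum : Integrable (fun x : H => 2 * inner ℝ (m - d) (x - m) + ‖m - d‖ ^ 2) P :=
    (hin.const_mul 2).add (integrable_const _)
  rw [integral_congr_ae (Filter.Eventually.of_forall e)]
  rw [integral_add (qh_int_sq P M hb m) hsum,
    integral_add (hin.const_mul 2) (integrable_const _), integral_const_mul, h0]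
  simp

lemma qh_int_sum {k : ℕ} (P : Measure H) [IsFiniteMeasure P] (M : ℝ)
    (hb : ∀ᵐ x ∂P, ‖x‖ ≤ M) (c d : Fin k → H) :
    Integrable (fun x => ∑ l, (vcell k c l).indicator (fun x => ‖x - d l‖ ^ 2) x) P :=
  integrable_finsetSum _ fun l _ => (qh_int_sq P M hb (d l)).indicator (qh_closed c l).measurableSet

lemma qh_integral_sum {k : ℕ} (P : Measure H) [IsFiniteMeasure P] (M : ℝ)
    (hb : ∀ᵐ x ∂P, ‖x‖ ≤ M) (c d : Fin k → H) :
    ∫ x, ∑ l, (vcell k c l).indicator (fun x => ‖x - d l‖ ^ 2) x ∂P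
      = ∑ l, ∫ x in vcell k c l, ‖x - d l‖ ^ 2 ∂P := by
  rw [integral_finsetSum _ fun l _ =>
    (qh_int_sq P M hb (d l)).indicator (qh_closed c l).measurableSet]
  refine Finset.sum_congr rfl fun l _ => ?_
  rw [integral_indicator (qh_closed c l).measurableSet]

lemma qh_risk_eq {k : ℕ} [Nonempty (Fin k)] (P : Measure H) [IsFiniteMeasure P] (M : ℝ)
    (hb : ∀ᵐ x ∂P, ‖x‖ ≤ M) (c : Fin k → H) (hN : ∀ᵐ x ∂P, x ∉ nbd k c) :
    qrisk k P c = ∑ l, ∫ x in vcell k c l, ‖x - c l‖ ^ 2 ∂P := by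
  rw [← qh_integral_sum P M hb c c, qrisk]
  refine integral_congr_ae ?_
  filter_upwards [hN] with x hx
  obtain ⟨i, hi⟩ := qh_exists_cell c x
  rw [qh_sum_ind c c x i hi hx, qh_gamma_eq c x i hi]

lemma qh_risk_le {k : ℕ} [Nonempty (Fin k)] (P : Measure H) [IsFiniteMeasure P] (M : ℝ)
    (hb : ∀ᵐ x ∂P, ‖x‖ ≤ M) (c d : Fin k → H) (hN : ∀ᵐ x ∂P, x ∉ nbd k c) :
    qrisk k P d ≤ ∑ l, ∫ x in vcell k c l, ‖x - d l‖ ^ 2 ∂P := by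
  rw [← qh_integral_sum P M hb c d, qrisk]
  refine integral_mono_ae (qh_int_gamma P M hb d) (qh_int_sum P M hb c d) ?_
  filter_upwards [hN] with x hx
  obtain ⟨i, hi⟩ := qh_exists_cell c x
  rw [qh_sum_ind c d x i hi hx]
  exact qh_gamma_le d x i

/-- optimal codebooks beat codebooks with a repeated entry by a uniform gap. -/
lemma qh_gap {k : ℕ} (hk : 2 ≤ k) (P : Measure H) [IsFiniteMeasure P] (M : ℝ)
    (hb : ∀ᵐ x ∂P, ‖x‖ ≤ M) (hsupp : suppGT P k) :
    ∃ δ : ℝ, 0 < δ ∧ ∀ (d : Fin k → H) (i j : Fin k), i ≠ j → d i = d j →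
      ∀ c ∈ qopt k P, qrisk k P c + δ ≤ qrisk k P d := by
  haveI : Nonempty (Fin k) := ⟨⟨0, by omega⟩⟩
  obtain ⟨T, hT, hTc⟩ : ∃ T : Finset H, (T : Set H) ⊆ P.support ∧ T.card = k + 1 := by
    by_cases hf : P.support.Finite
    · have h1 : k + 1 ≤ hf.toFinset.card := by
        by_contra! h
        refine hsupp hf.toFinset (by omega) ?_
        rw [hf.coe_toFinset]
        exact Measure.measure_compl_support
      obtain ⟨T, hT, hc⟩ := Finset.exists_subset_card_eq h1
      refine ⟨T, fun x hx => ?_, hc⟩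
      have := hT hx
      simpa using this
    · exact Set.Infinite.exists_subset_card_eq hf (k + 1)
  have hTn : (T : Set H).Nontrivial := by
    exact Finset.one_lt_card_iff_nontrivial.1 (by omega)
  have hsep := (T.finite_toSet.infsep_pos_iff_nontrivial).2 hTn
  set ρ := (T : Set H).infsep / 4 with hρ
  have hρ0 : 0 < ρ := by positivity
  obtain ⟨x0, hx0, hmin⟩ := T.exists_min_image (fun x => P.real (closedBall x (ρ / 2)))
    (Finset.card_pos.1 (by omega))
  have hm0 : 0 < P.real (closedBall x0 (ρ / 2)) := by
    rw [measureReal_def, ENNReal.toReal_pos_iff]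
    refine ⟨?_, measure_lt_top _ _⟩
    have := hT hx0
    rw [Measure.mem_support_iff_forall] at this
    exact this _ (closedBall_mem_nhds _ (by positivity))
  refine ⟨P.real (closedBall x0 (ρ / 2)) * ρ ^ 2, by positivity, ?_⟩
  intro d i j hij hdij c hc
  obtain ⟨x, hxT, hx⟩ : ∃ x ∈ T, ∀ l, 2 * ρ ≤ dist x (d l) := by
    by_contra! h
    choose! g hg using h
    obtain ⟨y, hy, z, hz, hyz, hgyz⟩ := Finset.exists_ne_map_eq_of_card_lt_of_maps_to
      (s := T) (t := (Finset.univ : Finset (Fin k))) (by simp [hTc]) (f := g)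
      (fun _ _ => Finset.mem_univ _)
    have h1 := hg y hy
    have h2 := hg z hz
    rw [← hgyz] at h2
    have h3 := Set.infsep_le_dist_of_mem (s := (T : Set H)) hy hz hyz
    have h4 := dist_triangle_right y z (d (g y))
    linarith
  have hle := hc (Function.update d i x)
  suffices h : qrisk k P (Function.update d i x) + P.real (closedBall x (ρ / 2)) * ρ ^ 2
      ≤ qrisk k P d by
    have := hmin x hxT
    have h2 : P.real (closedBall x0 (ρ / 2)) * ρ ^ 2 ≤ P.real (closedBall x (ρ / 2)) * ρ ^ 2 := by
      gcongr
    linarith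
  have hind : P.real (closedBall x (ρ / 2)) * ρ ^ 2
      = ∫ y, (closedBall x (ρ / 2)).indicator (fun _ => ρ ^ 2) y ∂P := by
    rw [integral_indicator measurableSet_closedBall]; simp
  have hI : Integrable ((closedBall x (ρ / 2)).indicator (fun _ => ρ ^ 2)) P :=
    (integrable_const (ρ ^ 2)).indicator measurableSet_closedBall
  rw [hind, qrisk, qrisk, ← integral_add (qh_int_gamma P M hb _) hI]
  refine integral_mono ((qh_int_gamma P M hb _).add hI) (qh_int_gamma P M hb _) fun y => ?_
  by_cases hy : y ∈ closedBall x (ρ / 2)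
  · simp only [hy, Set.indicator_of_mem]
    obtain ⟨l, hl⟩ := qh_exists_cell d y
    rw [qh_gamma_eq d y l hl]
    have h1 := qh_gamma_le (Function.update d i x) y i
    rw [Function.update_self] at h1
    rw [mem_closedBall] at hy
    have h2 := hx l
    have h3 := dist_triangle_left x (d l) y
    rw [dist_eq_norm y (d l)] at h3
    rw [← dist_eq_norm] at h1
    have h5 : 3 / 2 * ρ ≤ ‖y - d l‖ := by linarith
    have h6 : dist y x ^ 2 ≤ (ρ / 2) ^ 2 := by gcongr
    have h7 : (3 / 2 * ρ) ^ 2 ≤ ‖y - d l‖ ^ 2 := by gcongr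
    nlinarith
  · simp only [hy, not_false_eq_true, Set.indicator_of_notMem, add_zero]
    obtain ⟨l, hl⟩ := qh_exists_cell d y
    rw [qh_gamma_eq d y l hl]
    by_cases h : l = i
    · have := qh_gamma_le (Function.update d i x) y j
      rw [Function.update_of_ne hij.symm, ← hdij] at this
      rw [h]; exact this
    · have := qh_gamma_le (Function.update d i x) y l
      rwa [Function.update_of_ne h] at this

/-- removing a code point. -/
lemma qh_remove {k : ℕ} (P : Measure H) [IsFiniteMeasure P] (M : ℝ)
    (hb : ∀ᵐ x ∂P, ‖x‖ ≤ M) (c : Fin k → H) (hN : ∀ᵐ x ∂P, x ∉ nbd k c) (i : Fin k) (y : H) :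
    qrisk k P (Function.update c i y) ≤ qrisk k P c - ∫ x in vcell k c i, ‖x - c i‖ ^ 2 ∂P
      + ∫ x in vcell k c i, ‖x - y‖ ^ 2 ∂P := by
  haveI : Nonempty (Fin k) := ⟨i⟩
  have h1 := qh_risk_le P M hb c (Function.update c i y) hN
  have h2 := qh_risk_eq P M hb c hN
  rw [← Finset.add_sum_erase _ _ (Finset.mem_univ i)] at h1 h2
  rw [Function.update_self, Finset.sum_congr rfl (g := fun l => ∫ x in vcell k c l, ‖x - c l‖ ^ 2 ∂P)
    (fun l hl => by rw [Function.update_of_ne (Finset.ne_of_mem_erase hl)])] at h1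
  linarith

lemma qh_cell_pos {k : ℕ} (hk : 2 ≤ k) (P : Measure H) [IsFiniteMeasure P] (M : ℝ)
    (hb : ∀ᵐ x ∂P, ‖x‖ ≤ M) (hsupp : suppGT P k) (c : Fin k → H) (hc : c ∈ qopt k P)
    (hN : ∀ᵐ x ∂P, x ∉ nbd k c) (i : Fin k) : 0 < P.real (vcell k c i) := by
  obtain ⟨δ, hδ, hgap⟩ := qh_gap hk P M hb hsupp
  haveI : Nontrivial (Fin k) := Fin.nontrivial_iff_two_le.2 hk
  obtain ⟨j, hj⟩ := exists_ne i
  by_contra! h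
  have h0 : P.real (vcell k c i) = 0 := le_antisymm h measureReal_nonneg
  rw [measureReal_eq_zero_iff] at h0
  have h1 := qh_remove P M hb c hN i (c j)
  have h2 := hgap (Function.update c i (c j)) i j hj.symm (by simp [hj]) c hc
  rw [Measure.restrict_eq_zero.2 h0] at h1
  simp at h1
  linarith

lemma qh_centroid {k : ℕ} [CompleteSpace H] (P : Measure H) [IsFiniteMeasure P] (M : ℝ)
    (hb : ∀ᵐ x ∂P, ‖x‖ ≤ M) (c : Fin k → H) (hc : c ∈ qopt k P)
    (hN : ∀ᵐ x ∂P, x ∉ nbd k c) (i : Fin k) (hp : 0 < P.real (vcell k c i)) :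
    ∫ x in vcell k c i, x ∂P = P.real (vcell k c i) • c i := by
  set m := (P.real (vcell k c i))⁻¹ • ∫ x in vcell k c i, x ∂P with hm
  have hm' : ∫ x in vcell k c i, x ∂P = P.real (vcell k c i) • m := by
    rw [hm, smul_smul, mul_inv_cancel₀ hp.ne', one_smul]
  have h1 := qh_remove P M hb c hN i m
  have h2 := hc (Function.update c i m)
  have h3 := qh_bias (P.restrict (vcell k c i)) M (ae_restrict_of_ae hb) m (c i)
    (by rw [measureReal_restrict_apply_univ]; exact hm')
  rw [measureReal_restrict_apply_univ] at h3
  have h4 : P.real (vcell k c i) * ‖m - c i‖ ^ 2 ≤ 0 := by linarith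
  have h5 : ‖m - c i‖ ^ 2 ≤ 0 := by
    by_contra! h
    have := mul_pos hp h
    linarith
  have h6 : ‖m - c i‖ = 0 := by
    have := norm_nonneg (m - c i)
    nlinarith
  rw [norm_sub_eq_zero_iff] at h6
  rw [hm', h6]

lemma qh_norm_le {k : ℕ} (P : Measure H) [IsFiniteMeasure P] (M : ℝ)
    (hb : ∀ᵐ x ∂P, ‖x‖ ≤ M) (c : Fin k → H) (i : Fin k) (hp : 0 < P.real (vcell k c i))
    (h : ∫ x in vcell k c i, x ∂P = P.real (vcell k c i) • c i) : ‖c i‖ ≤ M := by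
  have h1 := norm_integral_le_of_norm_le_const (μ := P.restrict (vcell k c i))
    (f := fun x : H => x) (C := M) (ae_restrict_of_ae hb)
  rw [h, measureReal_restrict_apply_univ, norm_smul, Real.norm_of_nonneg hp.le, mul_comm] at h1
  exact le_of_mul_le_mul_right h1 hp

/-- approximate compactness of weighted means. -/
lemma qh_compact [CompleteSpace H] (P : Measure H) [IsProbabilityMeasure P] (M : ℝ)
    (hb : ∀ᵐ x ∂P, ‖x‖ ≤ M) (q ε : ℝ) (hq : 0 < q) (hε : 0 < ε) :
    ∃ K : Set H, IsCompact K ∧ ∀ (V : Set H) (y : H), MeasurableSet V → q ≤ P.real V →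
      ∫ x in V, x ∂P = P.real V • y → ∃ z ∈ K, dist y z ≤ ε := by
  have hi := qh_int_id P M hb
  have hmem : MemLp (fun x : H => x) 1 P := memLp_one_iff_integrable.2 hi
  obtain ⟨s, hs, hsm⟩ := hmem.exists_simpleFunc_eLpNorm_sub_lt (by simp)
    (ε := ENNReal.ofReal (q * ε)) (by simp; positivity)
  have hsi : Integrable s P := memLp_one_iff_integrable.1 hsm
  have hdi : Integrable (fun x => x - s x) P := hi.sub hsi
  have hnorm : ∫ x, ‖x - s x‖ ∂P ≤ q * ε := by
    have h1 : ENNReal.ofReal (∫ x, ‖x - s x‖ ∂P) = eLpNorm ((fun x : H => x) - ⇑s) 1 P := by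
      rw [eLpNorm_one_eq_lintegral_enorm, ofReal_integral_norm_eq_lintegral_enorm hdi]
      rfl
    rw [← h1] at hs
    exact ((ENNReal.ofReal_lt_ofReal_iff (by positivity)).1 hs).le
  refine ⟨(fun w : s.range → ℝ => ∑ v : s.range, w v • (v : H)) ''
    (Set.pi Set.univ fun _ => Set.Icc 0 1), ?_, ?_⟩
  · exact (isCompact_univ_pi fun _ => isCompact_Icc).image (by fun_prop)
  · intro V y hV hqV hy
    have hp : 0 < P.real V := hq.trans_le hqV
    refine ⟨_, ⟨fun v => (P.real V)⁻¹ * (P.restrict V).real (s ⁻¹' {(v : H)}), ?_, rfl⟩, ?_⟩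
    · intro v _
      refine ⟨by positivity, ?_⟩
      rw [inv_mul_le_iff₀ hp, mul_one]
      refine (measureReal_mono (Set.subset_univ _)).trans ?_
      rw [measureReal_restrict_apply_univ]
    · have h1 : ∑ v : s.range, ((P.real V)⁻¹ * (P.restrict V).real (s ⁻¹' {(v : H)})) • (v : H)
          = (P.real V)⁻¹ • ∫ x in V, s x ∂P := by
        have := SimpleFunc.integral_eq_sum s (μ := P.restrict V) hsi.restrict
        rw [this, Finset.smul_sum, ← Finset.sum_coe_sort s.range]
        simp only [mul_smul]
      have h2 : y = (P.real V)⁻¹ • ∫ x in V, x ∂P := by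
        rw [hy, smul_smul, inv_mul_cancel₀ hp.ne', one_smul]
      show dist y (∑ v : s.range, ((P.real V)⁻¹ * (P.restrict V).real (s ⁻¹' {(v : H)})) • (v : H)) ≤ ε
      rw [h1, h2, dist_eq_norm, ← smul_sub, ← integral_sub hi.restrict hsi.restrict, norm_smul,
        Real.norm_of_nonneg (by positivity), inv_mul_le_iff₀ hp]
      calc ‖∫ x in V, (x - s x) ∂P‖ ≤ ∫ x in V, ‖x - s x‖ ∂P := norm_integral_le_integral_norm _
        _ ≤ ∫ x, ‖x - s x‖ ∂P :=
            setIntegral_le_integral hdi.norm (Filter.Eventually.of_forall fun _ => norm_nonneg _)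
        _ ≤ q * ε := hnorm
        _ ≤ P.real V * ε := by gcongr

/-- a uniformly separated subset close to a compact set is finite. -/
lemma qh_finite {X : Type*} [PseudoMetricSpace X] (S K : Set X) (hK : IsCompact K) (η : ℝ)
    (hη : 0 < η) (hsep : ∀ c ∈ S, ∀ d ∈ S, dist c d ≤ η → c = d)
    (hcl : ∀ c ∈ S, ∃ z ∈ K, dist c z ≤ η / 4) : S.Finite := by
  obtain ⟨t, -, ht, hcov⟩ := hK.finite_cover_balls (e := η / 4) (by positivity)
  have h : ∀ c ∈ S, ∃ z ∈ t, dist c z ≤ η / 2 := by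
    intro c hc
    obtain ⟨z, hz, hcz⟩ := hcl c hc
    have := hcov hz
    simp only [Set.mem_iUnion, mem_ball] at this
    obtain ⟨w, hw, hzw⟩ := this
    exact ⟨w, hw, by have := dist_triangle c z w; linarith⟩
  choose! g hg hg2 using h
  refine Set.Finite.of_finite_image (f := g) (ht.subset ?_) ?_
  · rintro _ ⟨c, hc, rfl⟩; exact hg c hc
  · intro c hc d hd hcd
    refine hsep c hc d hd ?_
    have h1 := hg2 c hc
    have h2 := hg2 d hd
    have hcd' : g c = g d := hcd
    rw [← hcd'] at h2
    have := dist_triangle_right c d (g c)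
    linarith

/-- local quadratic lower bound -/
lemma qh_local {k : ℕ} [CompleteSpace H] [Nonempty (Fin k)] (P : Measure H) [IsFiniteMeasure P]
    (M a b : ℝ) (hM : 0 < M) (hb : ∀ᵐ x ∂P, ‖x‖ ≤ M) (c c' : Fin k → H)
    (hN : ∀ᵐ x ∂P, x ∉ nbd k c)
    (hcen : ∀ l, ∫ x in vcell k c l, x ∂P = P.real (vcell k c l) • c l)
    (hc : ∀ l, ‖c l‖ ≤ M) (hc' : ∀ l, ‖c' l‖ ≤ M) (ha : ∀ l, ‖c l - c' l‖ ≤ a)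
    (hb0 : 0 < b) (hbc : ∀ i j, i ≠ j → b ≤ ‖c i - c j‖) :
    qrisk k P c + ∑ l, P.real (vcell k c l) * ‖c l - c' l‖ ^ 2
      ≤ qrisk k P c' + 8 * M * a * P.real (cthickening (4 * M * a / b) (nbd k c)) := by
  obtain ⟨i0⟩ := (inferInstance : Nonempty (Fin k))
  have ha0 : 0 ≤ a := (norm_nonneg _).trans (ha i0)
  set T := cthickening (4 * M * a / b) (nbd k c) with hT
  have hTm : MeasurableSet T := isClosed_cthickening.measurableSet
  have h1 : qrisk k P c + ∑ l, P.real (vcell k c l) * ‖c l - c' l‖ ^ 2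
      = ∫ x, ∑ l, (vcell k c l).indicator (fun x => ‖x - c' l‖ ^ 2) x ∂P := by
    rw [qh_integral_sum P M hb, qh_risk_eq P M hb c hN, ← Finset.sum_add_distrib]
    refine Finset.sum_congr rfl fun l _ => ?_
    have h3 := qh_bias (P.restrict (vcell k c l)) M (ae_restrict_of_ae hb) (c l) (c' l)
      (by rw [measureReal_restrict_apply_univ]; exact hcen l)
    rw [measureReal_restrict_apply_univ] at h3
    exact h3.symm
  have hind : 8 * M * a * P.real T = ∫ y, T.indicator (fun _ => 8 * M * a) y ∂P := by
    rw [integral_indicator hTm]; simp [mul_comm]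
  have hI : Integrable (T.indicator (fun _ => 8 * M * a)) P :=
    (integrable_const _).indicator hTm
  rw [h1, hind, qrisk, ← integral_add (qh_int_gamma P M hb _) hI]
  refine integral_mono_ae (qh_int_sum P M hb c c') ((qh_int_gamma P M hb _).add hI) ?_
  filter_upwards [hN, hb] with x hx hxM
  obtain ⟨i, hi⟩ := qh_exists_cell c x
  obtain ⟨j, hj⟩ := qh_exists_cell c' x
  rw [qh_sum_ind c c' x i hi hx, qh_gamma_eq c' x j hj]
  by_cases hij : i = j
  · have : 0 ≤ T.indicator (fun _ => 8 * M * a) x :=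
      Set.indicator_nonneg (fun _ _ => by positivity) x
    rw [hij]; linarith
  · have hxT : x ∈ T := qh_geom c c' M a b i j hij x hxM hc hc' ha hb0 (hbc i j hij) hi hj
    rw [Set.indicator_of_mem hxT]
    have e1 := qh_sqdiff x (c' i) (c i) M a hxM (hc' i) (hc i)
      (by rw [norm_sub_rev]; exact ha i)
    have e2 := qh_sqdiff x (c j) (c' j) M a hxM (hc j) (hc' j) (ha j)
    have e3 : ‖x - c i‖ ^ 2 ≤ ‖x - c j‖ ^ 2 := by
      have := hi j
      gcongr
    linarith

end helpers

/-- Proposition 2.2 (ii): under the margin condition, the set of optimal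
codebooks is finite. -/
theorem stmt2 [BorelSpace H] [SecondCountableTopology H] [CompleteSpace H]
    (k : ℕ) (hk : 2 ≤ k) (P : Measure H) [IsProbabilityMeasure P]
    (M : ℝ) (hM : 0 < M) (hsupp : suppGT P k) (hne : (qopt k P).Nonempty)
    (r0 : ℝ) (hmargin : margin k P M r0) :
    (qopt k P).Finite := by
  obtain ⟨hr0, hmb, hmar⟩ := hmargin
  haveI : Nontrivial (Fin k) := Fin.nontrivial_iff_two_le.2 hk
  haveI : Nonempty (Fin k) := inferInstance
  have hb : ∀ᵐ x ∂P, ‖x‖ ≤ M := by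
    have : ∀ᵐ x ∂P, x ∈ closedBall (0 : H) M := hmb
    filter_upwards [this] with x hx
    simpa using hx
  have hw : ∀ c ∈ qopt k P, ∀ t, 0 ≤ t → t ≤ r0 →
      P.real (cthickening t (nbd k c)) ≤ qB k P * qpmin k P * t / (128 * M ^ 2) := by
    intro c hc t h0 h1
    refine le_trans ?_ (hmar t h0 h1)
    refine le_csSup ⟨1, ?_⟩ ⟨c, hc, rfl⟩
    rintro _ ⟨d, _, rfl⟩
    exact measureReal_le_one
  have hN : ∀ c ∈ qopt k P, ∀ᵐ x ∂P, x ∉ nbd k c := by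
    intro c hc
    have h := hw c hc 0 le_rfl hr0.le
    rw [mul_zero, zero_div] at h
    have h0 := le_antisymm h measureReal_nonneg
    rw [measureReal_eq_zero_iff] at h0
    have h1 : P (nbd k c) = 0 :=
      measure_mono_null (self_subset_cthickening (nbd k c)) h0
    exact measure_eq_zero_iff_ae_notMem.1 h1
  have hpos : ∀ c ∈ qopt k P, ∀ i, 0 < P.real (vcell k c i) := fun c hc i =>
    qh_cell_pos hk P M hb hsupp c hc (hN c hc) i
  have hcen : ∀ c ∈ qopt k P, ∀ i,
      ∫ x in vcell k c i, x ∂P = P.real (vcell k c i) • c i := fun c hc i =>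
    qh_centroid P M hb c hc (hN c hc) i (hpos c hc i)
  have hcM : ∀ c ∈ qopt k P, ∀ i, ‖c i‖ ≤ M := fun c hc i =>
    qh_norm_le P M hb c i (hpos c hc i) (hcen c hc i)
  obtain ⟨δ, hδ, hgap⟩ := qh_gap hk P M hb hsupp
  -- the gap in terms of cell masses and distances
  have hkey : ∀ c ∈ qopt k P, ∀ i j, i ≠ j →
      δ ≤ P.real (vcell k c i) * (4 * M * ‖c i - c j‖) := by
    intro c hc i j hij
    have h1 := qh_remove P M hb c (hN c hc) i (c j)
    have h2 := hgap (Function.update c i (c j)) i j hij (by simp [hij.symm]) c hc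
    have h3 : ∫ x in vcell k c i, ‖x - c j‖ ^ 2 ∂P
        ≤ ∫ x in vcell k c i, (‖x - c i‖ ^ 2 + 4 * M * ‖c i - c j‖) ∂P := by
      have hb' := ae_restrict_of_ae (s := vcell k c i) hb
      refine integral_mono_ae (qh_int_sq _ M hb' _)
        ((qh_int_sq _ M hb' _).add (integrable_const _)) ?_
      filter_upwards [hb'] with x hx
      exact qh_sqdiff x (c j) (c i) M _ hx (hcM c hc j) (hcM c hc i)
        (norm_sub_rev _ _).le
    rw [integral_add (qh_int_sq _ M (ae_restrict_of_ae hb) _) (integrable_const _)] at h3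
    simp only [integral_const, measureReal_restrict_apply_univ, smul_eq_mul] at h3
    linarith
  have hple : ∀ c ∈ qopt k P, ∀ i, δ / (8 * M ^ 2) ≤ P.real (vcell k c i) := by
    intro c hc i
    obtain ⟨j, hj⟩ := exists_ne i
    have h1 := hkey c hc i j hj.symm
    have h2 : ‖c i - c j‖ ≤ 2 * M :=
      (norm_sub_le _ _).trans (by linarith [hcM c hc i, hcM c hc j])
    rw [div_le_iff₀ (by positivity)]
    have h3 : P.real (vcell k c i) * (4 * M * ‖c i - c j‖)
        ≤ P.real (vcell k c i) * (4 * M * (2 * M)) := by gcongr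
    linarith
  have hBle : ∀ c ∈ qopt k P, ∀ i j, i ≠ j → δ / (4 * M) ≤ ‖c i - c j‖ := by
    intro c hc i j hij
    have h1 := hkey c hc i j hij
    have h3 : P.real (vcell k c i) * (4 * M * ‖c i - c j‖)
        ≤ 1 * (4 * M * ‖c i - c j‖) := by
      gcongr
      exact measureReal_le_one
    rw [div_le_iff₀ (by positivity)]
    linarith
  obtain ⟨c0, hc0⟩ := hne
  obtain ⟨i0, j0, hij0⟩ := exists_pair_ne (Fin k)
  have hB0 : 0 < qB k P := by
    refine lt_of_lt_of_le (b := δ / (4 * M)) (by positivity) ?_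
    refine le_csInf ⟨_, c0, hc0, i0, j0, hij0, rfl⟩ ?_
    rintro _ ⟨c, hc, i, j, hij, rfl⟩
    exact hBle c hc i j hij
  have hB1 : ∀ c ∈ qopt k P, ∀ i j, i ≠ j → qB k P ≤ ‖c i - c j‖ := by
    intro c hc i j hij
    refine csInf_le ⟨0, ?_⟩ ⟨c, hc, i, j, hij, rfl⟩
    rintro _ ⟨c, hc, i, j, hij, rfl⟩
    exact norm_nonneg _
  have hp0 : 0 < qpmin k P := by
    refine lt_of_lt_of_le (b := δ / (8 * M ^ 2)) (by positivity) ?_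
    refine le_csInf ⟨_, c0, hc0, i0, rfl⟩ ?_
    rintro _ ⟨c, hc, i, rfl⟩
    exact hple c hc i
  have hp1 : ∀ c ∈ qopt k P, ∀ i, qpmin k P ≤ P.real (vcell k c i) := by
    intro c hc i
    refine csInf_le ⟨0, ?_⟩ ⟨c, hc, i, rfl⟩
    rintro _ ⟨c, hc, i, rfl⟩
    exact ENNReal.toReal_nonneg
  set η := qB k P * r0 / (4 * M) with hη
  have hη0 : 0 < η := by positivity
  obtain ⟨K, hK, hKV⟩ := qh_compact P M hb (qpmin k P) (η / 4) hp0 (by positivity)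
  refine qh_finite (qopt k P) (Set.pi Set.univ fun _ => K) (isCompact_univ_pi fun _ => hK)
    η hη0 ?_ ?_
  · intro c hc c' hc' hd
    set a := dist c c' with ha
    have ha0 : 0 ≤ a := dist_nonneg
    have hal : ∀ l, ‖c l - c' l‖ ≤ a := fun l => by
      rw [← dist_eq_norm]; exact dist_le_pi_dist c c' l
    have h1 := qh_local P M a (qB k P) hM hb c c' (hN c hc) (hcen c hc) (hcM c hc)
      (hcM c' hc') hal hB0 (hB1 c hc)
    have h2 := hc' c
    have h3 := hw c hc (4 * M * a / qB k P) (by positivity) (by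
      rw [div_le_iff₀ hB0]
      rw [hη, le_div_iff₀ (by positivity)] at hd
      linarith)
    have h4 : qB k P * qpmin k P * (4 * M * a / qB k P) / (128 * M ^ 2)
        = qpmin k P * a / (32 * M) := by
      field_simp; ring
    rw [h4] at h3
    have h5 : 8 * M * a * P.real (cthickening (4 * M * a / qB k P) (nbd k c))
        ≤ 8 * M * a * (qpmin k P * a / (32 * M)) := by gcongr
    have h6 : 8 * M * a * (qpmin k P * a / (32 * M)) = qpmin k P * (a / 2) ^ 2 := by
      field_simp; ring
    have h7 : ∀ l, dist (c l) (c' l) ≤ a / 2 := by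
      intro l
      have h8 : P.real (vcell k c l) * ‖c l - c' l‖ ^ 2
          ≤ ∑ l, P.real (vcell k c l) * ‖c l - c' l‖ ^ 2 :=
        Finset.single_le_sum (f := fun l => P.real (vcell k c l) * ‖c l - c' l‖ ^ 2)
          (fun _ _ => by positivity) (Finset.mem_univ l)
      have h9 : qpmin k P * ‖c l - c' l‖ ^ 2 ≤ P.real (vcell k c l) * ‖c l - c' l‖ ^ 2 := by
        have := hp1 c hc l
        gcongr
      have h10 : qpmin k P * ‖c l - c' l‖ ^ 2 ≤ qpmin k P * (a / 2) ^ 2 := by linarith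
      have h11 := le_of_mul_le_mul_left h10 hp0
      rw [dist_eq_norm]
      exact (pow_le_pow_iff_left₀ (norm_nonneg _) (by positivity) two_ne_zero).1 h11
    have h8 : a ≤ a / 2 := (dist_pi_le_iff (by positivity)).2 h7
    exact dist_le_zero.1 (by linarith)
  · intro c hc
    have h : ∀ i, ∃ z ∈ K, dist (c i) z ≤ η / 4 := fun i =>
      hKV (vcell k c i) (c i) (qh_closed c i).measurableSet (hp1 c hc i) (hcen c hc i)
    choose z hz hz2 using h
    exact ⟨z, fun i _ => hz i, (dist_pi_le_iff (by positivity)).2 hz2⟩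

end
end

section
/- If P satisfies a margin condition with radius r_0, then there exists ε > 0 such that P is ε-separated; that is, the infimum of ℓ(c,c*) over all local minimizers c of the distortion R that are not optimal codebooks equals some ε > 0. -/
open MeasureTheory Metric

noncomputable section

variable {H : Type*} [NormedAddCommGroup H] [InnerProductSpace ℝ H] [MeasurableSpace H]

/-- `P` is `ε`-separated: the infimum of the excess risk over local minimizers of
the distortion which are not optimal codebooks equals `ε`. -/
def qseparated (k : ℕ) (P : Measure H) (ε : ℝ) : Prop :=
  ∀ cs ∈ qopt k P,
    sInf {r | ∃ c : Fin k → H, IsLocalMin (qrisk k P) c ∧ c ∉ qopt k P ∧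
      r = qrisk k P c - qrisk k P cs} = ε


open Filter Topology

theorem iInf_cont (k : ℕ) [Nonempty (Fin k)] : Continuous (fun a : Fin k → ℝ => ⨅ j, a j) := by
  have : (fun a : Fin k → ℝ => ⨅ j, a j)
      = fun a => Finset.univ.inf' Finset.univ_nonempty (fun j => a j) := by
    funext a
    rw [Finset.inf'_univ_eq_ciInf]
  rw [this]
  exact Continuous.finset_inf'_apply _ (fun i _ => continuous_apply i)

section basic
set_option linter.unusedSectionVars false

theorem qg_le (k : ℕ) (c : Fin k → H) (x : H) (j : Fin k) : qgamma k c x ≤ ‖x - c j‖ ^ 2 :=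
  ciInf_le (Set.finite_range _).bddBelow j

theorem qg_ex (k : ℕ) [Nonempty (Fin k)] (c : Fin k → H) (x : H) :
    ∃ j, qgamma k c x = ‖x - c j‖ ^ 2 := by
  obtain ⟨j, hj⟩ := exists_eq_ciInf_of_finite (f := fun j => ‖x - c j‖ ^ 2)
  exact ⟨j, hj.symm⟩

theorem qg_nonneg (k : ℕ) (c : Fin k → H) (x : H) : 0 ≤ qgamma k c x :=
  Real.iInf_nonneg (fun _ => by positivity)

theorem qg_cont (k : ℕ) [Nonempty (Fin k)] (c : Fin k → H) : Continuous (qgamma k c) := by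
  unfold qgamma
  exact (iInf_cont k).comp (continuous_pi fun j => by fun_prop)

theorem qg_ex_cell (k : ℕ) [Nonempty (Fin k)] (c : Fin k → H) (x : H) :
    ∃ j, x ∈ vcell k c j ∧ qgamma k c x = ‖x - c j‖ ^ 2 := by
  obtain ⟨j, hj⟩ := qg_ex k c x
  refine ⟨j, fun l => ?_, hj⟩
  have := qg_le k c x l
  rw [hj] at this
  exact (sq_le_sq₀ (norm_nonneg _) (norm_nonneg _)).1 this

theorem qg_eq_of_cell (k : ℕ) [Nonempty (Fin k)] (c : Fin k → H) (x : H) (j : Fin k)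
    (h : x ∈ vcell k c j) : qgamma k c x = ‖x - c j‖ ^ 2 := by
  refine le_antisymm (qg_le k c x j) ?_
  obtain ⟨l, hl⟩ := qg_ex k c x
  rw [hl]
  exact (sq_le_sq₀ (norm_nonneg _) (norm_nonneg _)).2 (h l)

theorem vcell_closed (k : ℕ) (c : Fin k → H) (i : Fin k) : IsClosed (vcell k c i) := by
  have : vcell k c i = ⋂ j, {x | ‖x - c i‖ ≤ ‖x - c j‖} := by
    ext x; simp [vcell]
  rw [this]
  exact isClosed_iInter fun j => isClosed_le (by fun_prop) (by fun_prop)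

/-- distance to the Voronoi boundary -/
theorem geom (k : ℕ) [Nonempty (Fin k)] (a : Fin k → H) (i j : Fin k) (x : H)
    (hx : x ∈ vcell k a i) (hij : i ≠ j) (b t : ℝ) (hb : 0 < b) (hba : b ≤ ‖a i - a j‖)
    (ht : ‖x - a j‖ ^ 2 - ‖x - a i‖ ^ 2 ≤ 2 * b * t) :
    x ∈ cthickening t (nbd k a) := by
  set d := a j - a i with hd
  have hdn : ‖d‖ = ‖a i - a j‖ := by rw [hd, norm_sub_rev]
  have hdpos : 0 < ‖d‖ := by rw [hdn]; linarith
  set D := ‖x - a j‖ ^ 2 - ‖x - a i‖ ^ 2 with hD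
  have hD0 : 0 ≤ D := by
    have := (sq_le_sq₀ (norm_nonneg _) (norm_nonneg _)).2 (hx j)
    linarith
  set lam := D / (2 * ‖d‖ ^ 2) with hlam
  set y := x + lam • d with hy
  have hlam' : 2 * lam * ‖d‖ ^ 2 = D := by rw [hlam]; field_simp
  have hlam0 : 0 ≤ lam := by positivity
  have hxj : x - a j = (x - a i) - d := by rw [hd]; abel
  have e1 : ‖x - a j‖ ^ 2 = ‖x - a i‖ ^ 2 - 2 * inner ℝ (x - a i) d + ‖d‖ ^ 2 := by
    rw [hxj, norm_sub_sq_real]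
  have hyi : ‖y - a i‖ ^ 2 = ‖x - a i‖ ^ 2 + 2 * (lam * inner ℝ (x - a i) d) + ‖lam • d‖ ^ 2 := by
    have : y - a i = (x - a i) + lam • d := by rw [hy]; abel
    rw [this, norm_add_sq_real, inner_smul_right]
  have hyj : ‖y - a j‖ ^ 2 = ‖y - a i‖ ^ 2 := by
    have : y - a j = (x - a i) + (lam - 1) • d := by rw [hy, hd, sub_smul, one_smul]; abel
    rw [hyi, this, norm_add_sq_real, inner_smul_right, norm_smul, norm_smul, mul_pow, mul_pow]
    simp only [Real.norm_eq_abs, sq_abs]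
    nlinarith
  have hyj' : ‖y - a j‖ = ‖y - a i‖ := by
    exact (sq_eq_sq₀ (norm_nonneg _) (norm_nonneg _)).1 hyj
  have hseg : IsPreconnected (segment ℝ x y) := (convex_segment x y).isPreconnected
  have hcl : IsClosed (⋃ l : {l : Fin k // l ≠ i}, vcell k a l.1) :=
    isClosed_iUnion_of_finite fun l => vcell_closed k a l.1
  obtain ⟨z, hz, hzi, hzu⟩ := isPreconnected_closed_iff.1 hseg (vcell k a i) _
    (vcell_closed k a i) hcl (by
      intro z _
      obtain ⟨l, hl, -⟩ := qg_ex_cell k a z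
      by_cases h : l = i
      · left; rw [← h]; exact hl
      · right; exact Set.mem_iUnion.2 ⟨⟨l, h⟩, hl⟩)
    ⟨x, left_mem_segment ℝ x y, hx⟩ (by
      refine ⟨y, right_mem_segment ℝ x y, ?_⟩
      obtain ⟨l, hl, -⟩ := qg_ex_cell k a y
      by_cases h : l = i
      · refine Set.mem_iUnion.2 ⟨⟨j, hij.symm⟩, fun m => ?_⟩
        rw [h] at hl
        simp only
        rw [hyj']; exact hl m
      · exact Set.mem_iUnion.2 ⟨⟨l, h⟩, hl⟩)
  obtain ⟨⟨l, hli⟩, hzl⟩ := Set.mem_iUnion.1 hzu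
  refine mem_cthickening_of_dist_le x z t _ ?_ ?_
  · simp only [nbd, Set.mem_iUnion]
    exact ⟨i, l, fun h => hli h.symm, hzi, hzl⟩
  · have h1 : dist x z ≤ dist x y := by
      have := dist_add_dist_of_mem_segment hz
      have h2 := dist_nonneg (x := z) (y := y)
      linarith
    have h2 : dist x y = lam * ‖d‖ := by
      rw [dist_eq_norm, hy]
      simp [norm_smul, abs_of_nonneg hlam0]
    rw [h2] at h1
    refine h1.trans ?_
    have ht0 : 0 ≤ t := by
      by_contra h
      push Not at h
      nlinarith
    have : (lam * ‖d‖) * ‖d‖ ≤ t * ‖d‖ := by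
      have : b * t ≤ ‖d‖ * t := mul_le_mul_of_nonneg_right (by rw [hdn]; exact hba) ht0
      nlinarith
    exact le_of_mul_le_mul_right this hdpos

/-- points whose cell membership differs lie near the boundary -/
theorem symm_near (k : ℕ) [Nonempty (Fin k)] (a c : Fin k → H) (M δ b : ℝ) (hb : 0 < b)
    (hsep : ∀ i j, i ≠ j → b ≤ ‖a i - a j‖) (ha : ∀ i, ‖a i‖ ≤ M)
    (hδ : ∀ i, ‖c i - a i‖ ≤ δ) (x : H) (hx : ‖x‖ ≤ M) (i : Fin k)
    (h : (x ∈ vcell k a i ∧ x ∉ vcell k c i) ∨ (x ∉ vcell k a i ∧ x ∈ vcell k c i)) :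
    x ∈ cthickening (4 * M * δ / b) (nbd k a) := by
  have hδ0 : 0 ≤ δ := (norm_nonneg _).trans (hδ i)
  have key : ∀ i j, i ≠ j → x ∈ vcell k a i → ‖x - c j‖ ≤ ‖x - c i‖ →
      x ∈ cthickening (4 * M * δ / b) (nbd k a) := by
    intro i j hij hxi hle
    refine geom k a i j x hxi hij b _ hb (hsep i j hij) ?_
    have e : 2 * b * (4 * M * δ / b) = 8 * M * δ := by field_simp; ring
    rw [e]
    have h1 : ‖x - a j‖ ≤ ‖x - c j‖ + δ := by
      have : x - a j = (x - c j) + (c j - a j) := by abel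
      rw [this]; exact (norm_add_le _ _).trans (by linarith [hδ j])
    have h2 : ‖x - c i‖ ≤ ‖x - a i‖ + δ := by
      have : x - c i = (x - a i) - (c i - a i) := by abel
      rw [this]; exact (norm_sub_le _ _).trans (by linarith [hδ i])
    have h3 : ‖x - a j‖ ≤ 2 * M := (norm_sub_le _ _).trans (by linarith [ha j])
    have h4 : ‖x - a i‖ ≤ 2 * M := (norm_sub_le _ _).trans (by linarith [ha i])
    have h5 := norm_nonneg (x - a j)
    have h6 := norm_nonneg (x - a i)
    have h7 : ‖x - a j‖ - ‖x - a i‖ ≤ 2 * δ := by linarith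
    have h8 : (‖x - a j‖ - ‖x - a i‖) * (‖x - a j‖ + ‖x - a i‖)
        ≤ (2 * δ) * (‖x - a j‖ + ‖x - a i‖) := mul_le_mul_of_nonneg_right h7 (by linarith)
    have h9 : (2 * δ) * (‖x - a j‖ + ‖x - a i‖) ≤ (2 * δ) * (4 * M) :=
      mul_le_mul_of_nonneg_left (by linarith) (by linarith)
    nlinarith
  rcases h with ⟨h1, h2⟩ | ⟨h1, h2⟩
  · simp only [vcell, Set.mem_ofPred_eq, not_forall, not_le] at h2
    obtain ⟨j, hj⟩ := h2
    refine key i j ?_ h1 hj.le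
    rintro rfl
    exact lt_irrefl _ hj
  · obtain ⟨j, hj, -⟩ := qg_ex_cell k a x
    refine key j i ?_ hj (h2 j)
    rintro rfl
    exact h1 hj

/-- bounded sequences of codebooks have weakly convergent subsequences -/
theorem weak_sub [SecondCountableTopology H] [CompleteSpace H] (k : ℕ) (c : ℕ → Fin k → H) (C : ℝ)
    (hC : ∀ n i, ‖c n i‖ ≤ C) :
    ∃ (a : Fin k → H) (φ : ℕ → ℕ), StrictMono φ ∧
      ∀ i v, Tendsto (fun n => inner ℝ (c (φ n) i) v) atTop (𝓝 (inner ℝ (a i) v)) := by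
  let E := PiLp 2 (fun _ : Fin k => H)
  let u : ℕ → E := fun n => WithLp.toLp 2 (c n)
  have hu : ∀ n, ‖u n‖ ≤ Real.sqrt (∑ _i : Fin k, C ^ 2) := by
    intro n
    rw [PiLp.norm_eq_of_L2]
    refine Real.sqrt_le_sqrt (Finset.sum_le_sum fun i _ => ?_)
    exact pow_le_pow_left₀ (norm_nonneg _) (hC n i) 2
  let f : ℕ → WeakDual ℝ E := fun n => StrongDual.toWeakDual (InnerProductSpace.toDual ℝ E (u n))
  obtain ⟨g, -, φ, hφ, hlim⟩ := WeakDual.isSeqCompact_closedBall ℝ E (0 : StrongDual ℝ E)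
    (Real.sqrt (∑ _i : Fin k, C ^ 2)) (x := f) (by
      intro n
      simp [f]
      simpa using hu n)
  refine ⟨fun i => ((InnerProductSpace.toDual ℝ E).symm (WeakDual.toStrongDual g)) i, φ, hφ, ?_⟩
  intro i v
  have h1 := ((WeakDual.eval_continuous (𝕜 := ℝ) (PiLp.single 2 i v : E)).tendsto g).comp hlim
  have h2 : ∀ w : E, inner ℝ w (PiLp.single 2 i v : E) = inner ℝ (w i) v := by
    intro w
    rw [PiLp.inner_apply, Finset.sum_eq_single i]
    · simp
    · intro j _ hj
      simp [hj]
    · simp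
  rw [← h2]
  have h3 : inner ℝ ((InnerProductSpace.toDual ℝ E).symm (WeakDual.toStrongDual g))
      (PiLp.single 2 i v : E) = g (PiLp.single 2 i v : E) := by
    rw [InnerProductSpace.toDual_symm_apply]; rfl
  rw [h3]
  refine h1.congr fun n => ?_
  show inner ℝ (u (φ n)) (PiLp.single 2 i v : E) = _
  rw [h2]



theorem ae_ball (P : Measure H) (M : ℝ) (hP : mbounded P M) : ∀ᵐ x ∂P, ‖x‖ ≤ M := by
  unfold mbounded at hP
  rw [ae_iff]
  convert hP using 2
  ext x; simp

variable [BorelSpace H] [SecondCountableTopology H]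

theorem cont_int {F : Type*} [NormedAddCommGroup F] [SecondCountableTopology F]
    (P : Measure H) [IsProbabilityMeasure P] (M : ℝ) (hP : mbounded P M)
    (f : H → F) (hf : Continuous f) (C : ℝ) (hC : ∀ x, ‖x‖ ≤ M → ‖f x‖ ≤ C) : Integrable f P := by
  refine Integrable.of_bound (C := C) hf.aestronglyMeasurable ?_
  filter_upwards [ae_ball P M hP] with x hx using hC x hx

theorem qg_bound (k : ℕ) [Nonempty (Fin k)] (M C : ℝ)
    (c : Fin k → H) (j : Fin k) (hc : ‖c j‖ ≤ C) (x : H) (hx : ‖x‖ ≤ M) :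
    ‖qgamma k c x‖ ≤ (M + C) ^ 2 := by
  rw [Real.norm_of_nonneg (qg_nonneg k c x)]
  refine (qg_le k c x j).trans (pow_le_pow_left₀ (norm_nonneg _) ?_ 2)
  exact (norm_sub_le _ _).trans (by linarith)

theorem qg_int (k : ℕ) [Nonempty (Fin k)] (P : Measure H) [IsProbabilityMeasure P] (M : ℝ)
    (hP : mbounded P M) (c : Fin k → H) : Integrable (qgamma k c) P :=
  cont_int P M hP _ (qg_cont k c) _
    (fun x hx => qg_bound k M _ c (Classical.arbitrary _) le_rfl x hx)

theorem id_int (P : Measure H) [IsProbabilityMeasure P] (M : ℝ)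
    (hP : mbounded P M) (v : H) : Integrable (fun x => x - v) P :=
  cont_int P M hP _ (by fun_prop) (M + ‖v‖) (fun x hx => (norm_sub_le _ _).trans (by linarith))

/-- If removing the point `i` has no effect, the codebook is not optimal. -/
theorem opt_pos (k : ℕ) [Nonempty (Fin k)] (P : Measure H) [IsProbabilityMeasure P] (M : ℝ)
    (hP : mbounded P M) (hsupp : suppGT P k) (a : Fin k → H) (ha : a ∈ qopt k P) (i : Fin k) :
    ¬ (∀ᵐ x ∂P, ∃ j, j ≠ i ∧ ‖x - a j‖ ≤ ‖x - a i‖) := by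
  intro hae
  classical
  have hred : ∀ᵐ x ∂P, ∃ j, j ≠ i ∧ qgamma k a x = ‖x - a j‖ ^ 2 := by
    filter_upwards [hae] with x hx
    obtain ⟨l, hl, hl2⟩ := qg_ex_cell k a x
    by_cases h : l = i
    · obtain ⟨j, hj, hj2⟩ := hx
      refine ⟨j, hj, qg_eq_of_cell k a x j fun m => hj2.trans ?_⟩
      rw [← h]; exact hl m
    · exact ⟨l, h, hl2⟩
  have hle : ∀ y : H, ∀ᵐ x ∂P, qgamma k (Function.update a i y) x ≤ qgamma k a x := by
    intro y
    filter_upwards [hred] with x ⟨j, hj, hj2⟩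
    rw [hj2]
    refine (qg_le k _ x j).trans ?_
    rw [Function.update_of_ne hj]
  have heq : ∀ y : H, ∀ᵐ x ∂P, qgamma k (Function.update a i y) x = qgamma k a x := by
    intro y
    have h1 := (integral_eq_iff_of_ae_le (qg_int k P M hP _) (qg_int k P M hP a) (hle y)).1
      (le_antisymm (integral_mono_ae (qg_int k P M hP _) (qg_int k P M hP a) (hle y)) (ha _))
    exact h1
  have hlb : ∀ y : H, ∀ᵐ x ∂P, qgamma k a x ≤ ‖x - y‖ ^ 2 := by
    intro y
    filter_upwards [heq y] with x hx
    rw [← hx]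
    simpa using qg_le k (Function.update a i y) x i
  have hall : ∀ᵐ x ∂P, ∀ n : ℕ, qgamma k a x ≤ ‖x - TopologicalSpace.denseSeq H n‖ ^ 2 :=
    ae_all_iff.2 fun n => hlb _
  have hz : ∀ᵐ x ∂P, x ∈ ((Finset.univ.image a : Finset H) : Set H) := by
    filter_upwards [hall] with x hx
    have hx' : ∀ y, qgamma k a x ≤ ‖x - y‖ ^ 2 := by
      have hcl : IsClosed {y | qgamma k a x ≤ ‖x - y‖ ^ 2} :=
        isClosed_le continuous_const (by fun_prop)
      intro y
      have hsub : Set.range (TopologicalSpace.denseSeq H) ⊆ {y | qgamma k a x ≤ ‖x - y‖ ^ 2} := by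
        rintro _ ⟨n, rfl⟩; exact hx n
      exact hcl.closure_subset_iff.2 hsub (TopologicalSpace.denseRange_denseSeq H y)
    obtain ⟨j, hj⟩ := qg_ex k a x
    have h0 := hx' x
    rw [hj] at h0
    simp only [sub_self, norm_zero] at h0
    have : ‖x - a j‖ = 0 := by
      have := norm_nonneg (x - a j)
      nlinarith
    have : x = a j := sub_eq_zero.1 (norm_eq_zero.1 this)
    simp [this]
  refine hsupp (Finset.univ.image a) ?_ ?_
  · exact Finset.card_image_le.trans (by simp)
  · exact hz

theorem opt_sep (k : ℕ) [Nonempty (Fin k)] (P : Measure H) [IsProbabilityMeasure P] (M : ℝ)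
    (hP : mbounded P M) (hsupp : suppGT P k) (a : Fin k → H) (ha : a ∈ qopt k P) (i j : Fin k)
    (hij : i ≠ j) : 0 < ‖a i - a j‖ := by
  rw [norm_pos_iff, sub_ne_zero]
  intro h
  refine opt_pos k P M hP hsupp a ha i (Eventually.of_forall fun x => ⟨j, hij.symm, ?_⟩)
  rw [h]

theorem opt_mass (k : ℕ) [Nonempty (Fin k)] (P : Measure H) [IsProbabilityMeasure P] (M : ℝ)
    (hP : mbounded P M) (hsupp : suppGT P k) (a : Fin k → H) (ha : a ∈ qopt k P) (i : Fin k) :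
    P (vcell k a i) ≠ 0 := by
  intro h
  refine opt_pos k P M hP hsupp a ha i ?_
  have h' : ∀ᵐ x ∂P, x ∉ vcell k a i := measure_eq_zero_iff_ae_notMem.1 h
  filter_upwards [h'] with x hx
  obtain ⟨l, hl, -⟩ := qg_ex_cell k a x
  refine ⟨l, ?_, hl i⟩
  rintro rfl
  exact hx hl

variable [CompleteSpace H]

theorem centroid (k : ℕ) [Nonempty (Fin k)] (P : Measure H) [IsProbabilityMeasure P] (M : ℝ)
    (hP : mbounded P M) (c : Fin k → H) (hc : IsLocalMin (qrisk k P) c) (i : Fin k) :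
    ∫ x in vcell k c i, (x - c i) ∂P = 0 := by
  set V := vcell k c i with hV
  have hVm : MeasurableSet V := (vcell_closed k c i).measurableSet
  set v := ∫ x in V, (x - c i) ∂P with hv
  have hup : ∀ s : ℝ, qrisk k P (Function.update c i (c i + s • v))
      ≤ qrisk k P c - 2 * s * ‖v‖ ^ 2 + s ^ 2 * ‖v‖ ^ 2 := by
    intro s
    have hint1 : Integrable (fun x => inner ℝ v (x - c i)) P :=
      (id_int P M hP (c i)).const_inner v
    have hint2 : Integrable (fun x => -2 * s * inner ℝ v (x - c i) + s ^ 2 * ‖v‖ ^ 2) P :=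
      (hint1.const_mul _).add (integrable_const _)
    have hpt : ∀ x, qgamma k (Function.update c i (c i + s • v)) x ≤
        qgamma k c x + V.indicator (fun x => -2 * s * inner ℝ v (x - c i) + s ^ 2 * ‖v‖ ^ 2) x := by
      intro x
      by_cases hx : x ∈ V
      · rw [Set.indicator_of_mem hx, qg_eq_of_cell k c x i hx]
        refine (qg_le k _ x i).trans (le_of_eq ?_)
        rw [Function.update_self]
        have : x - (c i + s • v) = (x - c i) - s • v := by abel
        rw [this, norm_sub_sq_real, inner_smul_right, norm_smul, mul_pow, real_inner_comm]
        simp only [Real.norm_eq_abs, sq_abs]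
        ring
      · rw [Set.indicator_of_notMem hx, add_zero]
        obtain ⟨l, hl, hl2⟩ := qg_ex_cell k c x
        have hli : l ≠ i := by rintro rfl; exact hx hl
        rw [hl2]
        refine (qg_le k _ x l).trans ?_
        rw [Function.update_of_ne hli]
    have h1 : qrisk k P (Function.update c i (c i + s • v)) ≤ ∫ x, (qgamma k c x +
        V.indicator (fun x => -2 * s * inner ℝ v (x - c i) + s ^ 2 * ‖v‖ ^ 2) x) ∂P :=
      integral_mono (qg_int k P M hP _) ((qg_int k P M hP c).add (hint2.indicator hVm)) hpt
    rw [integral_add (qg_int k P M hP c) (hint2.indicator hVm), integral_indicator hVm,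
      integral_add (hint1.const_mul _).integrableOn (integrable_const _).integrableOn,
      integral_const_mul, integral_inner (id_int P M hP (c i)).integrableOn, ← hv,
      real_inner_self_eq_norm_sq] at h1
    have h2 : ∫ x in V, s ^ 2 * ‖v‖ ^ 2 ∂P ≤ s ^ 2 * ‖v‖ ^ 2 := by
      rw [setIntegral_const, smul_eq_mul]
      exact mul_le_of_le_one_left (by positivity) measureReal_le_one
    have : ∫ x, qgamma k c x ∂P = qrisk k P c := rfl
    linarith
  have hcont : Tendsto (fun s : ℝ => Function.update c i (c i + s • v)) (𝓝[>] 0) (𝓝 c) := by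
    have h1 : Continuous (fun s : ℝ => Function.update c i (c i + s • v)) :=
      continuous_const.update i (by fun_prop)
    have h2 := h1.tendsto 0
    simp only [zero_smul, add_zero, Function.update_eq_self] at h2
    exact h2.mono_left nhdsWithin_le_nhds
  have hev := hcont.eventually hc
  have hlt : ∀ᶠ s : ℝ in 𝓝[>] 0, 0 < s ∧ s < 1 := by
    exact Ioo_mem_nhdsGT one_pos
  obtain ⟨s, hs1, hs0, hs2⟩ := (hev.and hlt).exists
  have h3 := hup s
  have h4 : s * (2 - s) * ‖v‖ ^ 2 ≤ 0 := by nlinarith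
  have h5 : 0 < s * (2 - s) := by nlinarith
  have h6 : ‖v‖ ^ 2 ≤ 0 := by
    by_contra h
    push Not at h
    nlinarith [mul_pos h5 h]
  have h7 : ‖v‖ = 0 := by nlinarith [norm_nonneg v]
  exact norm_eq_zero.1 h7

theorem centroid_bound (k : ℕ) [Nonempty (Fin k)] (P : Measure H) [IsProbabilityMeasure P] (M : ℝ)
    (hP : mbounded P M) (c : Fin k → H) (hc : IsLocalMin (qrisk k P) c) (i : Fin k)
    (hp : P (vcell k c i) ≠ 0) : ‖c i‖ ≤ M := by
  have h := centroid k P M hP c hc i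
  have hi : Integrable (fun x : H => x) P := by simpa using id_int P M hP 0
  rw [integral_sub hi.integrableOn (integrable_const _).integrableOn, setIntegral_const,
    sub_eq_zero] at h
  have h1 := norm_setIntegral_le_of_norm_le_const_ae (μ := P) (s := vcell k c i) (f := fun x : H => x)
    (C := M) (measure_lt_top _ _) (ae_restrict_of_ae (ae_ball P M hP))
  rw [h, norm_smul, Real.norm_of_nonneg measureReal_nonneg, mul_comm] at h1
  refine le_of_mul_le_mul_right h1 ?_
  exact ENNReal.toReal_pos hp (measure_ne_top _ _)

theorem opt_local (k : ℕ) (P : Measure H) (a : Fin k → H) (ha : a ∈ qopt k P) :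
    IsLocalMin (qrisk k P) a := Eventually.of_forall fun c => ha c

/-- near an optimal codebook, the only local minimizer is that codebook -/
theorem local_unique (k : ℕ) (hk : 2 ≤ k) [Nonempty (Fin k)] (P : Measure H)
    [IsProbabilityMeasure P] (M : ℝ) (hM : 0 < M)
    (hsupp : suppGT P k) (r0 : ℝ) (hmargin : margin k P M r0)
    (a : Fin k → H) (ha : a ∈ qopt k P) :
    ∃ η > 0, ∀ c : Fin k → H, IsLocalMin (qrisk k P) c → ‖c - a‖ ≤ η → c = a := by
  obtain ⟨hr0, hP, hm⟩ := hmargin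
  obtain ⟨b, hb, hsep, hqB⟩ : ∃ b > 0, (∀ i j, i ≠ j → b ≤ ‖a i - a j‖) ∧ qB k P ≤ b := by
    have : Nonempty {q : Fin k × Fin k // q.1 ≠ q.2} :=
      ⟨⟨(⟨0, by omega⟩, ⟨1, by omega⟩), by simp⟩⟩
    obtain ⟨q, hq⟩ := Finite.exists_min
      (fun q : {q : Fin k × Fin k // q.1 ≠ q.2} => ‖a q.1.1 - a q.1.2‖)
    refine ⟨_, opt_sep k P M hP hsupp a ha q.1.1 q.1.2 q.2, fun i j hij => hq ⟨(i, j), hij⟩, ?_⟩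
    refine csInf_le ⟨0, ?_⟩ ⟨a, ha, _, _, q.2, rfl⟩
    rintro _ ⟨_, _, _, _, _, rfl⟩
    exact norm_nonneg _
  have hqp : ∀ i, qpmin k P ≤ P.real (vcell k a i) := by
    intro i
    refine csInf_le ⟨0, ?_⟩ ⟨a, ha, i, rfl⟩
    rintro _ ⟨_, _, _, rfl⟩
    exact ENNReal.toReal_nonneg
  have hqB0 : 0 ≤ qB k P := by
    apply Real.sInf_nonneg
    rintro _ ⟨_, _, _, _, _, rfl⟩
    exact norm_nonneg _
  have hqp0 : 0 ≤ qpmin k P := by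
    apply Real.sInf_nonneg
    rintro _ ⟨_, _, _, rfl⟩
    exact ENNReal.toReal_nonneg
  have haM : ∀ i, ‖a i‖ ≤ M := fun i =>
    centroid_bound k P M hP a (opt_local k P a ha) i (opt_mass k P M hP hsupp a ha i)
  refine ⟨min M (b * r0 / (4 * M)), by positivity, fun c hc hca => ?_⟩
  set δ := ‖c - a‖ with hδ
  have hδM : δ ≤ M := hca.trans (min_le_left _ _)
  have hδr : δ ≤ b * r0 / (4 * M) := hca.trans (min_le_right _ _)
  have hδ0 : 0 ≤ δ := norm_nonneg _
  have hδi : ∀ i, ‖c i - a i‖ ≤ δ := fun i => norm_le_pi_norm (c - a) i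
  obtain ⟨i, hi⟩ : ∃ i, ‖c i - a i‖ = δ := by
    obtain ⟨i, hi⟩ := Finite.exists_max (fun i => ‖c i - a i‖)
    refine ⟨i, le_antisymm (hδi i) ?_⟩
    exact (pi_norm_le_iff_of_nonneg (norm_nonneg _)).2 hi
  set t := 4 * M * δ / b with ht
  have ht0 : 0 ≤ t := by positivity
  have htr : t ≤ r0 := by
    rw [ht, div_le_iff₀ hb]
    rw [le_div_iff₀ (by positivity)] at hδr
    linarith
  set T := cthickening t (nbd k a) with hT
  have hTm : MeasurableSet T := isClosed_cthickening.measurableSet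
  have hPT : P.real T ≤ qB k P * qpmin k P * t / (128 * M ^ 2) := by
    have hle : P.real T ≤ pweight k P t := by
      unfold pweight
      refine le_csSup ⟨1, ?_⟩ ⟨a, ha, rfl⟩
      rintro _ ⟨_, _, rfl⟩
      exact measureReal_le_one
    exact hle.trans (hm t ht0 htr)
  set V := vcell k a i
  set W := vcell k c i
  have hVm : MeasurableSet V := (vcell_closed k a i).measurableSet
  have hWm : MeasurableSet W := (vcell_closed k c i).measurableSet
  have ca : ∫ x in V, (x - a i) ∂P = 0 := centroid k P M hP a (opt_local k P a ha) i
  have cc : ∫ x in W, (x - c i) ∂P = 0 := centroid k P M hP c hc i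
  have I1 := id_int P M hP (a i)
  have I2 := id_int P M hP (c i)
  have e1 : P.real V • (c i - a i) =
      ∫ x, (W.indicator (fun x => x - c i) x - V.indicator (fun x => x - c i) x) ∂P := by
    rw [integral_sub (I2.indicator hWm) (I2.indicator hVm), integral_indicator hWm,
      integral_indicator hVm, cc, zero_sub]
    have : ∫ x in V, (x - a i) ∂P - ∫ x in V, (x - c i) ∂P = P.real V • (c i - a i) := by
      rw [← integral_sub I1.integrableOn I2.integrableOn, ← setIntegral_const]
      congr 1; funext x; abel
    rw [← this, ca, zero_sub]
  have e2 : ‖P.real V • (c i - a i)‖ ≤ ∫ x, T.indicator (fun _ => 3 * M) x ∂P := by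
    rw [e1]
    refine norm_integral_le_of_norm_le ((integrable_const _).indicator hTm) ?_
    filter_upwards [ae_ball P M hP] with x hx
    have hxc : ‖x - c i‖ ≤ 3 * M := by
      have : x - c i = (x - a i) - (c i - a i) := by abel
      rw [this]
      refine (norm_sub_le _ _).trans ?_
      have := norm_sub_le x (a i)
      linarith [hδi i, haM i]
    have hnn : 0 ≤ T.indicator (fun _ => 3 * M) x :=
      Set.indicator_nonneg (fun _ _ => by positivity) x
    by_cases hV : x ∈ V <;> by_cases hW : x ∈ W
    · simp only [Set.indicator_of_mem hV, Set.indicator_of_mem hW, sub_self, norm_zero]; exact hnn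
    · have hxT : x ∈ T := symm_near k a c M δ b hb hsep haM hδi x hx i (Or.inl ⟨hV, hW⟩)
      simp only [Set.indicator_of_mem hV, Set.indicator_of_notMem hW, Set.indicator_of_mem hxT,
        zero_sub, norm_neg]
      exact hxc
    · have hxT : x ∈ T := symm_near k a c M δ b hb hsep haM hδi x hx i (Or.inr ⟨hV, hW⟩)
      simp only [Set.indicator_of_notMem hV, Set.indicator_of_mem hW, Set.indicator_of_mem hxT,
        sub_zero]
      exact hxc
    · simp only [Set.indicator_of_notMem hV, Set.indicator_of_notMem hW, sub_self, norm_zero]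
      exact hnn
  rw [integral_indicator hTm, setIntegral_const, smul_eq_mul, norm_smul, hi,
    Real.norm_of_nonneg measureReal_nonneg] at e2
  have hVpos : 0 < P.real V :=
    ENNReal.toReal_pos (opt_mass k P M hP hsupp a ha i) (measure_ne_top _ _)
  have e3 : qB k P * qpmin k P * t / (128 * M ^ 2) ≤ P.real V * δ / (32 * M) := by
    have : P.real V * δ / (32 * M) = b * P.real V * t / (128 * M ^ 2) := by
      rw [ht]; field_simp; ring
    rw [this]
    have := mul_le_mul hqB (hqp i) hqp0 hb.le
    gcongr
  have e4 : P.real V * δ ≤ P.real V * δ * (3 / 32) := by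
    calc P.real V * δ ≤ P.real T * (3 * M) := e2
      _ ≤ (P.real V * δ / (32 * M)) * (3 * M) := by
        apply mul_le_mul_of_nonneg_right (hPT.trans e3) (by positivity)
      _ = _ := by field_simp
  have e5 : δ = 0 := by
    by_contra h
    have : 0 < δ := lt_of_le_of_ne hδ0 (Ne.symm h)
    have := mul_pos hVpos this
    linarith
  exact sub_eq_zero.1 (norm_eq_zero.1 e5)

/-- bounded minimizing sequences converge strongly along a subsequence -/
theorem min_seq (k : ℕ) [Nonempty (Fin k)] (P : Measure H)
    [IsProbabilityMeasure P] (M : ℝ) (hP : mbounded P M)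
    (hsupp : suppGT P k) (cs : Fin k → H) (hcs : cs ∈ qopt k P)
    (c : ℕ → Fin k → H) (C : ℝ) (hC : ∀ n i, ‖c n i‖ ≤ C)
    (hlim : Tendsto (fun n => qrisk k P (c n)) atTop (𝓝 (qrisk k P cs))) :
    ∃ a ∈ qopt k P, ∃ φ : ℕ → ℕ, StrictMono φ ∧
      ∀ i, Tendsto (fun n => c (φ n) i) atTop (𝓝 (a i)) := by
  obtain ⟨a, φ, hφ, hw⟩ := weak_sub k c C hC
  -- linearised distances
  let l : ℕ → Fin k → H → ℝ := fun n i x =>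
    ‖x - a i‖ ^ 2 + 2 * inner ℝ (a i - c (φ n) i) (x - a i)
  have hl : ∀ n i x, ‖x - c (φ n) i‖ ^ 2 = l n i x + ‖a i - c (φ n) i‖ ^ 2 := by
    intro n i x
    have : x - c (φ n) i = (x - a i) + (a i - c (φ n) i) := by abel
    rw [this, norm_add_sq_real, real_inner_comm]
  have hlt : ∀ i x, Tendsto (fun n => l n i x) atTop (𝓝 (‖x - a i‖ ^ 2)) := by
    intro i x
    have h1 : Tendsto (fun n => inner ℝ (a i - c (φ n) i) (x - a i)) atTop (𝓝 0) := by
      have := (tendsto_const_nhds (x := inner ℝ (a i) (x - a i))).sub (hw i (x - a i))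
      simpa [inner_sub_left] using this
    have := (tendsto_const_nhds (x := ‖x - a i‖ ^ 2)).add (h1.const_mul 2)
    simpa [l] using this
  let g : ℕ → H → ℝ := fun n x => ⨅ i, l n i x
  have hgc : ∀ n, Continuous (g n) := fun n =>
    (iInf_cont k).comp (continuous_pi fun j => by simp only [l]; fun_prop)
  have hgt : ∀ x, Tendsto (fun n => g n x) atTop (𝓝 (qgamma k a x)) := by
    intro x
    exact ((iInf_cont k).tendsto _).comp (tendsto_pi_nhds.2 fun i => hlt i x)
  have hgle : ∀ n x, g n x ≤ qgamma k (c (φ n)) x := by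
    intro n x
    refine le_ciInf fun j => ?_
    refine (ciInf_le (Set.finite_range _).bddBelow j).trans ?_
    rw [hl n j x]
    nlinarith [sq_nonneg ‖a j - c (φ n) j‖]
  obtain ⟨A, hA⟩ : ∃ A, ∀ i, ‖a i‖ ≤ A := ⟨‖a‖, fun i => norm_le_pi_norm a i⟩
  have hgb : ∀ n x, ‖x‖ ≤ M → ‖g n x‖ ≤ (M + A) ^ 2 + 2 * ((A + C) * (M + A)) := by
    intro n x hx
    obtain ⟨j, hj⟩ := exists_eq_ciInf_of_finite (f := fun i => l n i x)
    have : g n x = l n j x := hj.symm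
    rw [this]
    have h1 : ‖x - a j‖ ≤ M + A := (norm_sub_le _ _).trans (by linarith [hA j])
    have h2 : ‖a j - c (φ n) j‖ ≤ A + C := (norm_sub_le _ _).trans (by linarith [hA j, hC (φ n) j])
    have h3 := abs_real_inner_le_norm (a j - c (φ n) j) (x - a j)
    have h4 : ‖a j - c (φ n) j‖ * ‖x - a j‖ ≤ (A + C) * (M + A) :=
      mul_le_mul h2 h1 (norm_nonneg _) ((norm_nonneg _).trans h2)
    have h5 : ‖x - a j‖ ^ 2 ≤ (M + A) ^ 2 := pow_le_pow_left₀ (norm_nonneg _) h1 2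
    simp only [l]
    rw [Real.norm_eq_abs, abs_le]
    have := abs_le.1 h3
    constructor <;> nlinarith [sq_nonneg ‖x - a j‖]
  have hgi : ∀ n, Integrable (g n) P := fun n => cont_int P M hP _ (hgc n) _ (hgb n)
  have hgI : Tendsto (fun n => ∫ x, g n x ∂P) atTop (𝓝 (qrisk k P a)) := by
    refine tendsto_integral_of_dominated_convergence
      (fun _ => (M + A) ^ 2 + 2 * ((A + C) * (M + A)))
      (fun n => (hgc n).aestronglyMeasurable) (integrable_const _) (fun n => ?_)
      (Eventually.of_forall hgt)
    filter_upwards [ae_ball P M hP] with x hx using hgb n x hx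
  have hlim' := hlim.comp hφ.tendsto_atTop
  have hle : qrisk k P a ≤ qrisk k P cs := le_of_tendsto_of_tendsto' hgI hlim'
    fun n => integral_mono (hgi n) (qg_int k P M hP _) (hgle n)
  have haopt : a ∈ qopt k P := fun c' => hle.trans (hcs c')
  have haeq : qrisk k P a = qrisk k P cs := le_antisymm hle (hcs a)
  have hdiff : Tendsto (fun n => ∫ x, (qgamma k (c (φ n)) x - g n x) ∂P) atTop (𝓝 0) := by
    have := hlim'.sub hgI
    rw [haeq, sub_self] at this
    refine this.congr fun n => ?_
    rw [integral_sub (qg_int k P M hP _) (hgi n)]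
    rfl
  have hL1 : Tendsto (fun n => eLpNorm ((fun x => qgamma k (c (φ n)) x - g n x) - 0) 1 P)
      atTop (𝓝 0) := by
    have h1 := (ENNReal.tendsto_ofReal hdiff)
    rw [ENNReal.ofReal_zero] at h1
    refine h1.congr fun n => ?_
    rw [sub_zero, eLpNorm_one_eq_lintegral_enorm,
      ofReal_integral_eq_lintegral_ofReal
        (f := fun x => qgamma k (c (φ n)) x - g n x) ((qg_int k P M hP _).sub (hgi n))
        (Eventually.of_forall fun x => sub_nonneg.2 (hgle n x))]
    refine lintegral_congr fun x => ?_
    rw [Real.enorm_of_nonneg (sub_nonneg.2 (hgle n x))]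
  have hmeas := tendstoInMeasure_of_tendsto_eLpNorm one_ne_zero
    (fun n => ((qg_int k P M hP (c (φ n))).sub (hgi n)).aestronglyMeasurable)
    aestronglyMeasurable_zero hL1
  obtain ⟨ψ, hψ, hae⟩ := hmeas.exists_seq_tendsto_ae
  refine ⟨a, haopt, φ ∘ ψ, hφ.comp hψ, fun i => ?_⟩
  -- pick a good point
  obtain ⟨x, hx, hxi⟩ : ∃ x, Tendsto (fun n => qgamma k (c (φ (ψ n))) x - g (ψ n) x) atTop (𝓝 0) ∧
      ∀ j, j ≠ i → ‖x - a i‖ < ‖x - a j‖ := by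
    by_contra hcon
    push Not at hcon
    refine opt_pos k P M hP hsupp a haopt i ?_
    filter_upwards [hae] with x hx
    exact hcon x hx
  have hxc : x ∈ vcell k a i := by
    intro j
    by_cases h : j = i
    · rw [h]
    · exact (hxi j h).le
  have hf : Tendsto (fun n => qgamma k (c (φ (ψ n))) x) atTop (𝓝 (‖x - a i‖ ^ 2)) := by
    have := hx.add ((hgt x).comp hψ.tendsto_atTop)
    rw [zero_add, qg_eq_of_cell k a x i hxc] at this
    refine this.congr fun n => ?_
    simp
  have hev : ∀ᶠ n in atTop, qgamma k (c (φ (ψ n))) x = ‖x - c (φ (ψ n)) i‖ ^ 2 := by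
    have h1 : ∀ j, ∀ᶠ n in atTop, j ≠ i → qgamma k (c (φ (ψ n))) x < l (ψ n) j x := by
      intro j
      by_cases h : j = i
      · exact Eventually.of_forall fun n hn => absurd h hn
      · have h2 : ‖x - a i‖ ^ 2 < ‖x - a j‖ ^ 2 :=
          pow_lt_pow_left₀ (hxi j h) (norm_nonneg _) two_ne_zero
        filter_upwards [hf.eventually_lt ((hlt j x).comp hψ.tendsto_atTop) h2] with n hn _ using hn
    filter_upwards [eventually_all.2 h1] with n hn
    obtain ⟨j, hj⟩ := qg_ex k (c (φ (ψ n))) x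
    by_cases h : j = i
    · rw [hj, h]
    · have h3 := hn j h
      rw [hj, hl] at h3
      nlinarith [sq_nonneg ‖a j - c (φ (ψ n)) j‖]
  have hd : Tendsto (fun n => ‖a i - c (φ (ψ n)) i‖ ^ 2) atTop (𝓝 0) := by
    have h1 := hf.sub ((hlt i x).comp hψ.tendsto_atTop)
    rw [sub_self] at h1
    refine h1.congr' ?_
    filter_upwards [hev] with n hn
    rw [hn, hl]
    simp
  have hd' : Tendsto (fun n => ‖c (φ (ψ n)) i - a i‖) atTop (𝓝 0) := by
    have h1 := hd.sqrt
    rw [Real.sqrt_zero] at h1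
    refine h1.congr fun n => ?_
    rw [Real.sqrt_sq (norm_nonneg _), norm_sub_rev]
  exact tendsto_iff_norm_sub_tendsto_zero.2 hd'

theorem exists_nonzero (k : ℕ) (hk : 2 ≤ k) (P : Measure H) (hsupp : suppGT P k) :
    ∃ v : H, v ≠ 0 := by
  by_contra hcon
  push Not at hcon
  refine hsupp {0} (by simp; omega) ?_
  have : (((({0} : Finset H)) : Set H)ᶜ) = ∅ := by
    ext x; simp [hcon x]
  rw [this, measure_empty]

theorem exists_norm (k : ℕ) (hk : 2 ≤ k) (P : Measure H) (hsupp : suppGT P k) (r : ℝ)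
    (hr : 0 ≤ r) : ∃ v : H, ‖v‖ = r := by
  obtain ⟨v, hv⟩ := exists_nonzero k hk P hsupp
  refine ⟨(r / ‖v‖) • v, ?_⟩
  rw [norm_smul, Real.norm_of_nonneg (by positivity)]
  have := norm_pos_iff.2 hv
  field_simp

/-- there is a non-optimal local minimizer -/
theorem exists_local (k : ℕ) (hk : 2 ≤ k) [Nonempty (Fin k)] (P : Measure H)
    [IsProbabilityMeasure P] (M : ℝ) (hM : 0 < M) (hP : mbounded P M)
    (hsupp : suppGT P k) :
    ∃ c : Fin k → H, IsLocalMin (qrisk k P) c ∧ c ∉ qopt k P := by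
  obtain ⟨w, hw⟩ := exists_norm k hk P hsupp (3 * M + 3) (by positivity)
  let m : H := ∫ x, x ∂P
  have hm : ‖m‖ ≤ M := by
    have := norm_integral_le_of_norm_le_const (ae_ball P M hP)
    simpa using this
  let i0 : Fin k := ⟨0, by omega⟩
  let i1 : Fin k := ⟨1, by omega⟩
  have hi : i1 ≠ i0 := by simp [i0, i1]
  let c : Fin k → H := fun i => if i = i0 then m else w
  have hc0 : c i0 = m := by simp [c]
  have hcj : ∀ j, j ≠ i0 → c j = w := fun j hj => by simp [c, hj]
  have hstrict : ∀ c' : Fin k → H, (∀ i, ‖c' i - c i‖ < 1) → ∀ x, ‖x‖ ≤ M → ∀ j, j ≠ i0 →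
      ‖x - c' i0‖ < ‖x - c' j‖ := by
    intro c' hc' x hx j hj
    have h1 : ‖x - c' i0‖ < 2 * M + 1 := by
      have : x - c' i0 = (x - m) - (c' i0 - c i0) := by rw [hc0]; abel
      rw [this]
      linarith [norm_sub_le (x - m) (c' i0 - c i0), norm_sub_le x m, hc' i0]
    have h2 : ‖w‖ ≤ ‖x - c' j‖ + ‖c' j - c j‖ + ‖x‖ := by
      have : w = x - (x - c' j) - (c' j - c j) := by rw [hcj j hj]; abel
      calc ‖w‖ = ‖x - (x - c' j) - (c' j - c j)‖ := by rw [← this]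
        _ ≤ _ := by linarith [norm_sub_le (x - (x - c' j)) (c' j - c j), norm_sub_le x (x - c' j)]
    linarith [hc' j]
  have hrisk : ∀ c' : Fin k → H, (∀ i, ‖c' i - c i‖ < 1) →
      qrisk k P c' = ∫ x, ‖x - c' i0‖ ^ 2 ∂P := by
    intro c' hc'
    refine integral_congr_ae ?_
    filter_upwards [ae_ball P M hP] with x hx
    refine qg_eq_of_cell k c' x i0 fun j => ?_
    by_cases h : j = i0
    · rw [h]
    · exact (hstrict c' hc' x hx j h).le
  have hcc : ∀ i, ‖c i - c i‖ < 1 := by intro i; simp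
  refine ⟨c, ?_, ?_⟩
  · have hball : ∀ᶠ c' in 𝓝 c, dist c' c < 1 := Metric.ball_mem_nhds c one_pos
    filter_upwards [hball] with c' hc'
    have hc'' : ∀ i, ‖c' i - c i‖ < 1 := fun i => by
      rw [← dist_eq_norm]; exact (dist_le_pi_dist c' c i).trans_lt hc'
    rw [hrisk c hcc, hrisk c' hc'', hc0]
    set u := c' i0
    have Im : Integrable (fun x => ‖x - m‖ ^ 2) P :=
      cont_int P M hP _ (by fun_prop) ((M + ‖m‖) ^ 2) (fun x hx => by
        rw [Real.norm_of_nonneg (by positivity)]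
        exact pow_le_pow_left₀ (norm_nonneg _) ((norm_sub_le _ _).trans (by linarith)) 2)
    have Ii : Integrable (fun x => 2 * inner ℝ (m - u) (x - m)) P :=
      ((id_int P M hP m).const_inner (m - u)).const_mul 2
    have hid : Integrable (fun x : H => x) P := by simpa using id_int P M hP 0
    have e : ∫ x, ‖x - u‖ ^ 2 ∂P = ∫ x, ‖x - m‖ ^ 2 ∂P + ‖m - u‖ ^ 2 := by
      have : ∀ x, ‖x - u‖ ^ 2 = (‖x - m‖ ^ 2 + 2 * inner ℝ (m - u) (x - m)) + ‖m - u‖ ^ 2 := by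
        intro x
        have : x - u = (x - m) + (m - u) := by abel
        rw [this, norm_add_sq_real, real_inner_comm]
      rw [integral_congr_ae (Eventually.of_forall this)]
      have Ia : Integrable (fun x => ‖x - m‖ ^ 2 + 2 * inner ℝ (m - u) (x - m)) P := Im.add Ii
      rw [integral_add Ia (integrable_const _), integral_add Im Ii, integral_const_mul,
        integral_inner (id_int P M hP m), integral_sub hid (integrable_const _)]
      simp [m]
    rw [e]
    nlinarith [sq_nonneg ‖m - u‖]
  · intro hopt
    refine opt_pos k P M hP hsupp c hopt i1 ?_
    filter_upwards [ae_ball P M hP] with x hx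
    exact ⟨i0, hi.symm, (hstrict c hcc x hx i1 hi).le⟩

theorem main_sep (k : ℕ) (hk : 2 ≤ k) [Nonempty (Fin k)] (P : Measure H)
    [IsProbabilityMeasure P] (M : ℝ) (hM : 0 < M)
    (hsupp : suppGT P k) (r0 : ℝ) (hmargin : margin k P M r0)
    (cs : Fin k → H) (hcs : cs ∈ qopt k P) :
    ∃ ε > 0, ∀ c : Fin k → H, IsLocalMin (qrisk k P) c → c ∉ qopt k P →
      ε ≤ qrisk k P c - qrisk k P cs := by
  have hP := hmargin.2.1
  by_contra hcon
  push Not at hcon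
  choose c hc1 hc2 hc3 using fun n : ℕ => hcon (1 / ((n : ℝ) + 1)) (by positivity)
  obtain ⟨w, hw⟩ := exists_norm k hk P hsupp (2 * M) (by positivity)
  let c' : ℕ → Fin k → H := fun n i => if ‖c n i‖ ≤ M then c n i else w
  have hb : ∀ n i, ‖c' n i‖ ≤ 2 * M := by
    intro n i
    by_cases h : ‖c n i‖ ≤ M
    · simp only [c', h, if_true]; linarith
    · simp only [c', h, if_false]; exact hw.le
  have hle : ∀ n, qrisk k P (c' n) ≤ qrisk k P (c n) := by
    intro n
    refine integral_mono_ae (qg_int k P M hP _) (qg_int k P M hP _) ?_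
    have h1 : ∀ᵐ x ∂P, ∀ i, ¬ ‖c n i‖ ≤ M → x ∉ vcell k (c n) i := by
      refine ae_all_iff.2 fun i => ?_
      by_cases h : ‖c n i‖ ≤ M
      · exact Eventually.of_forall fun x hx => absurd h hx
      · have h0 : P (vcell k (c n) i) = 0 := by
          by_contra h0
          exact h (centroid_bound k P M hP (c n) (hc1 n) i h0)
        filter_upwards [measure_eq_zero_iff_ae_notMem.1 h0] with x hx _ using hx
    filter_upwards [h1] with x hx
    obtain ⟨j, hj, hj2⟩ := qg_ex_cell k (c n) x
    have hjM : ‖c n j‖ ≤ M := by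
      by_contra h
      exact hx j h hj
    rw [hj2]
    refine (qg_le k (c' n) x j).trans ?_
    simp only [c', hjM, if_true]
    exact le_rfl
  have hlim : Tendsto (fun n => qrisk k P (c' n)) atTop (𝓝 (qrisk k P cs)) := by
    have h1 : Tendsto (fun n : ℕ => qrisk k P cs + 1 / ((n : ℝ) + 1)) atTop
        (𝓝 (qrisk k P cs)) := by
      simpa using (tendsto_const_nhds (x := qrisk k P cs)).add
        (tendsto_one_div_add_atTop_nhds_zero_nat (𝕜 := ℝ))
    refine tendsto_of_tendsto_of_tendsto_of_le_of_le tendsto_const_nhds h1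
      (fun n => hcs _) (fun n => ?_)
    have := hc3 n
    have := hle n
    simp only
    linarith
  obtain ⟨a, ha, φ, hφ, hconv⟩ := min_seq k P M hP hsupp cs hcs c' (2 * M) hb hlim
  have haM : ∀ i, ‖a i‖ ≤ M := fun i =>
    centroid_bound k P M hP a (opt_local k P a ha) i (opt_mass k P M hP hsupp a ha i)
  obtain ⟨η, hη, huniq⟩ := local_unique k hk P M hM hsupp r0 hmargin a ha
  have hev1 : ∀ᶠ n in atTop, ∀ i, ‖c' (φ n) i‖ < 2 * M := by
    refine eventually_all.2 fun i => ?_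
    exact (hconv i).norm.eventually_lt_const (by linarith [haM i])
  have hev2 : ∀ᶠ n in atTop, dist (c' (φ n)) a < η :=
    (tendsto_pi_nhds.2 hconv).eventually (Metric.ball_mem_nhds a hη)
  obtain ⟨n, hn1, hn2⟩ := (hev1.and hev2).exists
  have heq : c' (φ n) = c (φ n) := by
    funext i
    by_cases h : ‖c (φ n) i‖ ≤ M
    · simp only [c', h, if_true]
    · have := hn1 i
      simp only [c', h, if_false] at this
      linarith
  rw [heq, dist_eq_norm] at hn2
  have := huniq (c (φ n)) (hc1 _) hn2.le
  exact hc2 (φ n) (this ▸ ha)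

end basic

/-- Proposition 2.2 (iii): under the margin condition, `P` is `ε`-separated for
some `ε > 0`. -/
theorem stmt3 [BorelSpace H] [SecondCountableTopology H] [CompleteSpace H]
    (k : ℕ) (hk : 2 ≤ k) (P : Measure H) [IsProbabilityMeasure P]
    (M : ℝ) (hM : 0 < M) (hsupp : suppGT P k) (hne : (qopt k P).Nonempty)
    (r0 : ℝ) (hmargin : margin k P M r0) :
    ∃ ε : ℝ, 0 < ε ∧ qseparated k P ε := by
  have : Nonempty (Fin k) := ⟨⟨0, by omega⟩⟩
  obtain ⟨cs, hcs⟩ := hne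
  obtain ⟨ε, hε, hsep⟩ := main_sep k hk P M hM hsupp r0 hmargin cs hcs
  obtain ⟨c0, hc0, hc0'⟩ := exists_local k hk P M hM hmargin.2.1 hsupp
  refine ⟨sInf {r | ∃ c : Fin k → H, IsLocalMin (qrisk k P) c ∧ c ∉ qopt k P ∧
      r = qrisk k P c - qrisk k P cs}, ?_, ?_⟩
  · refine lt_of_lt_of_le hε (le_csInf ⟨_, c0, hc0, hc0', rfl⟩ ?_)
    rintro _ ⟨c, hc, hc', rfl⟩
    exact hsep c hc hc'
  · intro cs' hcs'
    have : qrisk k P cs' = qrisk k P cs := le_antisymm (hcs' cs) (hcs cs')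
    rw [this]

end
end
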